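/- arXiv:2106.08949 — 2 statements merged into one kernel-verified Lean document; each statement's English description precedes it below -/
import Mathlib

section
/- Let d ≥ 1 be an integer, p ∈ [1,∞), α ∈ (0, 1/d), and let I ⊂ (0,∞) be σ-compact. Let (w(λ))_{λ∈I} be a continuous family of bounded positive weight sequences. Assume that for every compact I₀ ⊂ I there exist D₁, D₂, D₃ > 0 and an integer N ≥ 0 such that for all n ≥ N: (1) the map a ↦ Σ_{i=1}^n log(w_i(a)) is D₁·n^α-Lipschitz on I₀; and (2) inf_{a∈I₀} w_1(a)⋯w_n(a) ≥ D₂·exp(D₃·n^α). Then the family (B_{w(λ₁)} × ⋯ × B_{w(λ_d)})_{λ∈I^d} admits a common hypercyclic algebra on ℓp(ℕ)^d for the coordinatewise product. -/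
open scoped ENNReal
open Finset

noncomputable section

/-- The space `ℓᵖ(ℕ)` of `p`-summable complex sequences. -/
abbrev lpC (p : ℝ≥0∞) : Type := lp (fun _ : ℕ => ℂ) p

/-- `T` is the product operator `B_{w(lam 0)} × ⋯ × B_{w(lam (d-1))}` of weighted backward
shifts, the weight sequence of the `i`-th factor being `(w (lam i) n)_{n ≥ 1}`. -/
def IsProductShift (p : ℝ≥0∞) [Fact (1 ≤ p)] (d : ℕ) (w : ℝ → ℕ → ℝ)
    (T : (Fin d → lpC p) →L[ℂ] (Fin d → lpC p)) (lam : Fin d → ℝ) : Prop :=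
  ∀ (v : Fin d → lpC p) (i : Fin d) (n : ℕ),
    (T v) i n = (w (lam i) (n + 1) : ℂ) * v i (n + 1)

/-- The family `T lam`, `lam ∈ S`, admits a common hypercyclic algebra for the coordinatewise
product: there is a non-unital subalgebra `A ≠ {0}` of `(ℓᵖ(ℕ))^d` (closed under addition,
scalar multiplication and the componentwise coordinatewise product) every nonzero element of
which is a common hypercyclic vector for the family. -/
def CommonHypercyclicAlgebraCW (p : ℝ≥0∞) [Fact (1 ≤ p)] (d : ℕ) (S : Set (Fin d → ℝ))
    (T : (Fin d → ℝ) → ((Fin d → lpC p) →L[ℂ] (Fin d → lpC p))) : Prop :=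
  ∃ A : Set (Fin d → lpC p),
    (0 : Fin d → lpC p) ∈ A ∧
    (∀ x ∈ A, ∀ y ∈ A, x + y ∈ A) ∧
    (∀ (c : ℂ), ∀ x ∈ A, c • x ∈ A) ∧
    (∀ x ∈ A, ∀ y ∈ A, ∃ z ∈ A, ∀ (i : Fin d) (n : ℕ), z i n = x i n * y i n) ∧
    (∃ x ∈ A, x ≠ 0) ∧
    (∀ x ∈ A, x ≠ 0 → ∀ lam ∈ S, Dense (Set.range fun n : ℕ => ((T lam) ^ (n + 1)) x))

/-!
The generator of the algebra is found by a Baire category argument. A nonzero element of the algebra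
generated by `x` is a combination of powers of `x` with a lowest term `x ^ (m + 1)`, so it suffices
that, for generic `x`, some iterate of `T lam` sends `x ^ (m + 1)` close to a prescribed `v` and
finitely many higher powers close to `0`.

To achieve this for all `lam` in a small cell at once, perturb a finitely supported vector by the
coordinatewise `(m + 1)`-th root of a sum of blocks: the `s`-th block is sent to `v` by the `t_s`-th
power of the operator with a parameter `μ_s`, where `t_s = q (N + s)`, `s < N`. Since `α < 1 / d`,
the cell can be visited by `N` slots so that the parameters served in slots `s` and `s'` are
`O((1 + |s - s'|) ^ α / N ^ α)`-close. The Lipschitz condition of order `n ^ α` on the logarithms of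
the weight products then lets `μ_s` stand for every parameter served in slot `s`, and keeps the
contributions of later slots below the stretched exponential decay
`exp (-(D₃ / 2) (t_s' - t_s) ^ α)`. Earlier blocks are annihilated. Taking roots makes higher powers
negligible compared with the `(m + 1)`-th one.
-/

open Filter Topology TopologicalSpace

section SuccPow

/-- `succPow x k` is the power `x ^ (k + 1)`; a ring without unit only has these powers. -/
def succPow {E : Type*} [Mul E] (x : E) : ℕ → E
  | 0 => x
  | k + 1 => succPow x k * x

theorem succPow_mul_succPow {E : Type*} [Semigroup E] (x : E) (j k : ℕ) :
    succPow x j * succPow x k = succPow x (j + k + 1) := by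
  induction k with
  | zero => rfl
  | succ k ih => rw [succPow, ← mul_assoc, ih]; rfl

theorem continuous_succPow {E : Type*} [Mul E] [TopologicalSpace E] [ContinuousMul E] (k : ℕ) :
    Continuous fun x : E => succPow x k := by
  induction k with
  | zero => exact continuous_id
  | succ k ih => exact ih.mul continuous_id

theorem exists_eq_sum_smul_succPow_of_mem_adjoin {𝕜 E : Type*} [CommSemiring 𝕜]
    [NonUnitalSemiring E] [Module 𝕜 E] [IsScalarTower 𝕜 E E] [SMulCommClass 𝕜 E E] {x y : E}
    (hy : y ∈ NonUnitalAlgebra.adjoin 𝕜 {x}) :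
    ∃ c : ℕ →₀ 𝕜, y = ∑ k ∈ c.support, c k • succPow x k := by
  let powers : Subsemigroup E :=
    { carrier := Set.range (succPow x)
      mul_mem' := by
        rintro _ _ ⟨j, rfl⟩ ⟨k, rfl⟩
        exact ⟨j + k + 1, (succPow_mul_succPow x j k).symm⟩ }
  have closure_le : Subsemigroup.closure {x} ≤ powers :=
    Subsemigroup.closure_le.2 (Set.singleton_subset_iff.2 ⟨0, rfl⟩)
  have hspan : y ∈ Submodule.span 𝕜 (Set.range (succPow x)) := by
    rw [← NonUnitalSubalgebra.mem_toSubmodule, NonUnitalAlgebra.adjoin_eq_span] at hy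
    exact Submodule.span_mono closure_le hy
  obtain ⟨c, hc⟩ := Finsupp.mem_span_range_iff_exists_finsupp.1 hspan
  exact ⟨c, hc.symm⟩

end SuccPow

section HypercyclicAlgebra

theorem norm_sum_smul_sub_lt {𝕜 F ι : Type*} [NormedField 𝕜] [SeminormedAddCommGroup F]
    [NormedSpace 𝕜 F] {s : Finset ι} {c : ι → 𝕜} (hc : ∀ k ∈ s, c k ≠ 0) {z : ι → F} {u : F}
    {m : ι} (hm : m ∈ s) {η : ℝ} (hzm : ‖z m - (c m)⁻¹ • u‖ < η)
    (hz : ∀ k ∈ s, k ≠ m → ‖z k‖ < η) :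
    ‖∑ k ∈ s, c k • z k - u‖ < ∑ k ∈ s, ‖c k‖ * η := by
  classical
  let e : ι → F := Pi.single m ((c m)⁻¹ • u)
  have e_same : e m = (c m)⁻¹ • u := Pi.single_eq_same _ _
  have e_ne (k : ι) (hkm : k ≠ m) : e k = 0 := Pi.single_eq_of_ne hkm _
  have he : ∑ k ∈ s, c k • e k = u := by
    rw [sum_eq_single_of_mem m hm fun k _ hkm => by rw [e_ne k hkm, smul_zero],
      e_same, smul_inv_smul₀ (hc m hm)]
  have term_lt : ∀ k ∈ s, ‖c k • (z k - e k)‖ < ‖c k‖ * η := by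
    intro k hk
    rw [norm_smul]
    refine mul_lt_mul_of_pos_left ?_ (norm_pos_iff.2 (hc k hk))
    rcases eq_or_ne k m with rfl | hkm
    · rwa [e_same]
    · rw [e_ne k hkm, sub_zero]
      exact hz k hk hkm
  calc ‖∑ k ∈ s, c k • z k - u‖ = ‖∑ k ∈ s, c k • (z k - e k)‖ := by
        simp only [smul_sub, sum_sub_distrib, he]
    _ ≤ ∑ k ∈ s, ‖c k • (z k - e k)‖ := norm_sum_le _ _
    _ < ∑ k ∈ s, ‖c k‖ * η := sum_lt_sum_of_nonempty ⟨m, hm⟩ term_lt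

variable {𝕜 E : Type*} [NontriviallyNormedField 𝕜] [NonUnitalNormedRing E] [NormedSpace 𝕜 E]

/-- The `n`-th iterate of `T` sends `x ^ (m + 1)` to within `ε` of `v` and makes the higher powers
`x ^ (k + 1)`, `m < k ≤ M`, smaller than `ε`. -/
def IsolatesPower (T : E →L[𝕜] E) (x : E) (m M : ℕ) (v : E) (ε : ℝ) (n : ℕ) : Prop :=
  ‖(T ^ n) (succPow x m) - v‖ < ε ∧ ∀ k ∈ Ioc m M, ‖(T ^ n) (succPow x k)‖ < ε

theorem norm_pow_apply_le {T : E →L[𝕜] E} {C : ℝ} (hT : ‖T‖ ≤ C) (n : ℕ) (z : E) :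
    ‖(T ^ n) z‖ ≤ C ^ n * ‖z‖ := by
  have hC : 0 ≤ C := (norm_nonneg T).trans hT
  induction n with
  | zero => simp
  | succ n ih =>
    calc ‖(T ^ (n + 1)) z‖ = ‖T ((T ^ n) z)‖ := by rw [pow_succ']; rfl
      _ ≤ C * (C ^ n * ‖z‖) := (T.le_of_opNorm_le hT _).trans (by gcongr)
      _ = C ^ (n + 1) * ‖z‖ := by ring

theorem eventually_isolatesPower (g : E) (m M : ℕ) (v : E) (N : ℕ) (C : ℝ) {ε' ε : ℝ}
    (hε : ε' < ε) :
    ∀ᶠ x in 𝓝 g, ∀ T : E →L[𝕜] E, ‖T‖ ≤ C → ∀ n ≤ N,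
      IsolatesPower T g m M v ε' n → IsolatesPower T x m M v ε n := by
  set A : ℝ := max 1 C ^ N
  have powers_close : ∀ᶠ x in 𝓝 g, ∀ k ∈ range (m + M + 1),
      A * ‖succPow x k - succPow g k‖ < ε - ε' := by
    refine (eventually_all_finset _).2 fun k _ => ?_
    have hcont : Continuous fun x => A * ‖succPow x k - succPow g k‖ :=
      continuous_const.mul ((continuous_succPow k).sub continuous_const).norm
    exact hcont.continuousAt.eventually_lt_const (by simpa using hε)
  filter_upwards [powers_close] with x hx T hT n hn hg
  have iterate_close (k : ℕ) (hk : k < m + M + 1) :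
      ‖(T ^ n) (succPow x k) - (T ^ n) (succPow g k)‖ < ε - ε' := by
    refine lt_of_le_of_lt ?_ (hx k (mem_range.2 hk))
    rw [← map_sub]
    refine (norm_pow_apply_le (hT.trans (le_max_right 1 C)) n _).trans ?_
    gcongr
    exact pow_le_pow_right₀ (le_max_left 1 C) hn
  refine ⟨?_, fun k hk => ?_⟩
  · have := norm_sub_le_norm_sub_add_norm_sub ((T ^ n) (succPow x m)) ((T ^ n) (succPow g m)) v
    linarith [iterate_close m (by omega), hg.1]
  · have := norm_le_norm_add_norm_sub' ((T ^ n) (succPow x k)) ((T ^ n) (succPow g k))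
    linarith [iterate_close k (by have := (mem_Ioc.1 hk).2; omega), hg.2 k hk]

variable {Λ : Type*} (T : Λ → E →L[𝕜] E)

theorem eventually_residual_isolatesPower {Ω : Set Λ} {m M : ℕ} {v : E} {ε' ε : ℝ} (hε : ε' < ε)
    (hdense : Dense {g | ∃ N, ∀ lam ∈ Ω, ∃ n ∈ Icc 1 N, IsolatesPower (T lam) g m M v ε' n}) :
    ∀ᶠ x in residual E, ∀ lam ∈ Ω, ∃ n ≥ 1, IsolatesPower (T lam) x m M v ε n := by
  have bounded (C : ℕ) : ∀ᶠ x in residual E, ∀ lam ∈ Ω, ‖T lam‖ ≤ C →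
      ∃ n ≥ 1, IsolatesPower (T lam) x m M v ε n := by
    refine mem_of_superset (residual_of_dense_open isOpen_interior (hdense.mono ?_))
      interior_subset
    rintro g ⟨N, hN⟩
    refine mem_interior_iff_mem_nhds.2 ?_
    filter_upwards [eventually_isolatesPower (𝕜 := 𝕜) g m M v N C hε] with x hx lam hlam hC
    obtain ⟨n, hn, hg⟩ := hN lam hlam
    exact ⟨n, (mem_Icc.1 hn).1, hx (T lam) hC n (mem_Icc.1 hn).2 hg⟩
  filter_upwards [eventually_countable_forall.2 bounded] with x hx lam hlam
  obtain ⟨C, hC⟩ := exists_nat_ge ‖T lam‖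
  exact hx C lam hlam hC

variable [IsScalarTower 𝕜 E E] [SMulCommClass 𝕜 E E]

theorem dense_orbit_of_isolatesPower {T : E →L[𝕜] E} {x y : E} {D : Set E} (hD : Dense D)
    (h : ∀ m M, ∀ v ∈ D, ∀ ε > 0, ∃ n ≥ 1, IsolatesPower T x m M v ε n)
    (hy : y ∈ NonUnitalAlgebra.adjoin 𝕜 {x}) (hy0 : y ≠ 0) :
    Dense (Set.range fun n : ℕ => (T ^ (n + 1)) y) := by
  obtain ⟨c, rfl⟩ := exists_eq_sum_smul_succPow_of_mem_adjoin hy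
  have supp : c.support.Nonempty := nonempty_of_sum_ne_zero hy0
  have ne_zero : ∀ k ∈ c.support, c k ≠ 0 := fun k => Finsupp.mem_support_iff.1
  have sum_pos : 0 < ∑ k ∈ c.support, ‖c k‖ :=
    sum_pos (fun k hk => norm_pos_iff.2 (ne_zero k hk)) supp
  set m := c.support.min' supp
  refine Metric.dense_iff.2 fun u ε hε => ?_
  set η : ℝ := ε / (2 * ∑ k ∈ c.support, ‖c k‖) with hη
  have hη0 : 0 < η := by positivity
  obtain ⟨v, hv, hvD⟩ := Metric.dense_iff.1 hD ((c m)⁻¹ • u) η hη0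
  obtain ⟨n, hn, hnm, hnk⟩ := h m (c.support.max' supp) v hvD η hη0
  rw [Metric.mem_ball, dist_eq_norm] at hv
  have lowest : ‖(T ^ n) (succPow x m) - (c m)⁻¹ • u‖ < 2 * η := by
    linarith [norm_sub_le_norm_sub_add_norm_sub ((T ^ n) (succPow x m)) v ((c m)⁻¹ • u)]
  have higher : ∀ k ∈ c.support, k ≠ m → ‖(T ^ n) (succPow x k)‖ < 2 * η := by
    intro k hk hkm
    have hmk : m < k := lt_of_le_of_ne (c.support.min'_le k hk) hkm.symm
    linarith [hnk k (mem_Ioc.2 ⟨hmk, c.support.le_max' k hk⟩)]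
  refine ⟨_, ?_, n - 1, rfl⟩
  simp only [Metric.mem_ball, dist_eq_norm, Nat.sub_add_cancel hn, map_sum, map_smul]
  calc ‖∑ k ∈ c.support, c k • (T ^ n) (succPow x k) - u‖
      < ∑ k ∈ c.support, ‖c k‖ * (2 * η) :=
        norm_sum_smul_sub_lt ne_zero (c.support.min'_mem supp) lowest higher
    _ = ε := by rw [← sum_mul, hη]; field_simp

theorem eventually_residual_dense_orbits [SeparableSpace E] {S : Set Λ} {D : Set E}
    (hD : Dense D)
    (h : ∀ m M, ∀ v ∈ D, ∀ ε > 0, ∃ 𝒞 : Set (Set Λ), 𝒞.Countable ∧ S ⊆ ⋃₀ 𝒞 ∧ ∀ Ω ∈ 𝒞,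
      Dense {g | ∃ N, ∀ lam ∈ Ω, ∃ n ∈ Icc 1 N, IsolatesPower (T lam) g m M v ε n}) :
    ∀ᶠ x in residual E, ∀ lam ∈ S, ∀ y ∈ NonUnitalAlgebra.adjoin 𝕜 {x}, y ≠ 0 →
      Dense (Set.range fun n : ℕ => ((T lam) ^ (n + 1)) y) := by
  obtain ⟨D', hD'D, hD'c, hD'⟩ := hD.exists_countable_dense_subset
  have isolates (m M : ℕ) (v : E) (hv : v ∈ D') (e : ℕ) : ∀ᶠ x in residual E, ∀ lam ∈ S,
      ∃ n ≥ 1, IsolatesPower (T lam) x m M v (1 / ((e : ℝ) + 1)) n := by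
    have he : 0 < 1 / ((e : ℝ) + 1) := Nat.one_div_pos_of_nat
    obtain ⟨𝒞, h𝒞, hS, hdense⟩ := h m M v (hD'D hv) _ (half_pos he)
    filter_upwards [(eventually_countable_ball h𝒞).2 fun Ω hΩ =>
      eventually_residual_isolatesPower T (half_lt_self he) (hdense Ω hΩ)] with x hx lam hlam
    obtain ⟨Ω, hΩ, hlamΩ⟩ := hS hlam
    exact hx Ω hΩ lam hlamΩ
  filter_upwards [eventually_countable_forall.2 fun m => eventually_countable_forall.2 fun M =>
    (eventually_countable_ball hD'c).2 fun v hv => eventually_countable_forall.2 fun e =>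
      isolates m M v hv e] with x hx lam hlam y hy hy0
  refine dense_orbit_of_isolatesPower hD' (fun m M v hv ε hε => ?_) hy hy0
  obtain ⟨e, he⟩ := exists_nat_one_div_lt hε
  obtain ⟨n, hn, hnm, hnk⟩ := hx m M v hv e lam hlam
  exact ⟨n, hn, hnm.trans he, fun k hk => (hnk k hk).trans he⟩

end HypercyclicAlgebra

section SequenceSpace

variable {p : ℝ≥0∞} [Fact (1 ≤ p)]

theorem exponent_ne_zero : p ≠ 0 := (zero_lt_one.trans_le Fact.out).ne'

theorem norm_apply_mul_le (f g : lpC p) (n : ℕ) : ‖f n * g n‖ ≤ ‖((‖f‖ : ℂ) • g) n‖ := by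
  rw [lp.coeFn_smul, Pi.smul_apply, norm_smul, norm_mul, Complex.norm_real, norm_norm]
  gcongr
  exact lp.norm_apply_le_norm exponent_ne_zero f n

namespace CoordinatewiseProduct

/-- The coordinatewise product of sequences. -/
scoped instance instMul : Mul (lpC p) :=
  ⟨fun f g => ⟨fun n => f n * g n,
    (lp.memℓp ((‖f‖ : ℂ) • g)).mono' (norm_apply_mul_le f g)⟩⟩

theorem coe_mul (f g : lpC p) : ⇑(f * g) = f * g := rfl

scoped instance instNonUnitalRing : NonUnitalRing (lpC p) :=
  Function.Injective.nonUnitalRing lp.coeFun.coe (by exact Subtype.coe_injective)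
    (lp.coeFn_zero _ _) lp.coeFn_add coe_mul lp.coeFn_neg lp.coeFn_sub
    (fun _ _ => rfl) fun _ _ => rfl

scoped instance instNonUnitalNormedRing : NonUnitalNormedRing (lpC p) :=
  { lp.normedAddCommGroup, instNonUnitalRing with
    norm_mul_le := fun f g => by
      calc ‖f * g‖ ≤ ‖(‖f‖ : ℂ) • g‖ :=
            lp.norm_mono exponent_ne_zero (norm_apply_mul_le f g)
        _ = ‖f‖ * ‖g‖ := by rw [norm_smul, Complex.norm_real, norm_norm] }

scoped instance instIsScalarTower : IsScalarTower ℂ (lpC p) (lpC p) :=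
  ⟨fun c f g => lp.ext (smul_mul_assoc c (⇑f) (⇑g))⟩

scoped instance instSMulCommClass : SMulCommClass ℂ (lpC p) (lpC p) :=
  ⟨fun c f g => lp.ext (mul_smul_comm c (⇑f) (⇑g)).symm⟩

end CoordinatewiseProduct

open scoped CoordinatewiseProduct

theorem succPow_apply {d : ℕ} (x : Fin d → lpC p) (k : ℕ) (i : Fin d) (n : ℕ) :
    succPow x k i n = x i n ^ (k + 1) := by
  induction k with
  | zero => rw [zero_add, pow_one]; rfl
  | succ k ih => rw [pow_succ, ← ih]; rfl

theorem norm_le_mul_norm_of_forall_apply_le {d : ℕ} {f g : Fin d → lpC p} {c : ℝ} (hc : 0 ≤ c)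
    (h : ∀ i n, ‖f i n‖ ≤ c * ‖g i n‖) : ‖f‖ ≤ c * ‖g‖ := by
  refine (pi_norm_le_iff_of_nonneg (by positivity)).2 fun i => ?_
  calc ‖f i‖ ≤ ‖(c : ℂ) • g i‖ := lp.norm_mono exponent_ne_zero fun n => by
        rw [lp.coeFn_smul, Pi.smul_apply, norm_smul, Complex.norm_real, Real.norm_of_nonneg hc]
        exact h i n
    _ = c * ‖g i‖ := by rw [norm_smul, Complex.norm_real, Real.norm_of_nonneg hc]
    _ ≤ c * ‖g‖ := by
        gcongr
        exact norm_le_pi_norm g i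

theorem norm_le_sum_norm_apply {f : lpC p} {s : Finset ℕ} (hf : ∀ n ∉ s, f n = 0) :
    ‖f‖ ≤ ∑ n ∈ s, ‖f n‖ := by
  have hsum : f = ∑ n ∈ s, lp.single p n (f n) := by
    ext n
    simp only [lp.coeFn_sum, Finset.sum_apply, lp.single_apply, Finset.sum_pi_single]
    split_ifs with hn
    exacts [rfl, hf n hn]
  calc ‖f‖ = ‖∑ n ∈ s, lp.single p n (f n)‖ := congr_arg norm hsum
    _ ≤ ∑ n ∈ s, ‖f n‖ := norm_sum_le_of_le s fun n _ =>
      (lp.norm_single (E := fun _ : ℕ => ℂ) (pos_iff_ne_zero.2 exponent_ne_zero) n (f n)).le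

/-- The sequence `f` cut off at `L`, as an element of `ℓᵖ(ℕ)`. -/
def truncate (p : ℝ≥0∞) [Fact (1 ≤ p)] (f : ℕ → ℂ) (L : ℕ) : lpC p :=
  ∑ k ∈ range L, lp.single p k (f k)

theorem truncate_apply (f : ℕ → ℂ) (L n : ℕ) : truncate p f L n = if n < L then f n else 0 := by
  simp only [truncate, lp.coeFn_sum, Finset.sum_apply, lp.single_apply, Finset.sum_pi_single,
    mem_range]

theorem tendsto_truncate (hp : p ≠ ⊤) (f : lpC p) :
    Tendsto (fun L => truncate p f L) atTop (𝓝 f) :=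
  (lp.hasSum_single hp f).tendsto_sum_nat

theorem separableSpace_lpC (hp : p ≠ ⊤) : SeparableSpace (lpC p) := by
  let s : Submodule ℂ (lpC p) := Submodule.span ℂ (Set.range fun k : ℕ => lp.single p k (1 : ℂ))
  have separable : IsSeparable (s : Set (lpC p)) := (Set.countable_range _).isSeparable.span
  have dense : closure (s : Set (lpC p)) = Set.univ := by
    refine Set.eq_univ_of_forall fun f => mem_closure_of_tendsto (tendsto_truncate hp f)
      (Eventually.of_forall fun L => Submodule.sum_mem _ fun k _ => ?_)
    have : lp.single p k (f k) = f k • lp.single (E := fun _ : ℕ => ℂ) p k (1 : ℂ) := by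
      rw [← lp.single_smul, smul_eq_mul, mul_one]
    exact this ▸ Submodule.smul_mem _ _ (Submodule.subset_span ⟨k, rfl⟩)
  exact isSeparable_univ_iff.1 (dense ▸ separable.closure)

theorem dense_finite_support (hp : p ≠ ⊤) (d : ℕ) :
    Dense {x : Fin d → lpC p | ∃ L, ∀ i, ∀ k ≥ L, x i k = 0} := by
  have dense_factor : Dense {f : lpC p | ∃ L, ∀ k ≥ L, f k = 0} := fun f =>
    mem_closure_of_tendsto (tendsto_truncate hp f) (Eventually.of_forall fun L =>
      ⟨L, fun k hk => (truncate_apply _ _ _).trans (if_neg hk.not_gt)⟩)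
  refine (dense_pi Set.univ fun (_ : Fin d) _ => dense_factor).mono fun x hx => ?_
  choose L hL using fun i => hx i (Set.mem_univ i)
  exact ⟨univ.sup L, fun i k hk => hL i k ((le_sup (mem_univ i)).trans hk)⟩

theorem commonHypercyclicAlgebraCW_of_residual {d : ℕ} (hd : 1 ≤ d) {S : Set (Fin d → ℝ)}
    {T : (Fin d → ℝ) → ((Fin d → lpC p) →L[ℂ] (Fin d → lpC p))}
    (h : ∀ᶠ x in residual (Fin d → lpC p), ∀ lam ∈ S, ∀ y ∈ NonUnitalAlgebra.adjoin ℂ {x},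
      y ≠ 0 → Dense (Set.range fun n : ℕ => ((T lam) ^ (n + 1)) y)) :
    CommonHypercyclicAlgebraCW p d S T := by
  have : Nonempty (Fin d) := ⟨⟨0, hd⟩⟩
  have : Nontrivial (lpC p) :=
    ⟨lp.single p 0 1, 0, fun h0 => one_ne_zero <| by
      simpa only [lp.single_apply_self, lp.coeFn_zero, Pi.zero_apply] using
        congr_arg (fun f : lpC p => f 0) h0⟩
  have ne_zero : ∀ᶠ x in residual (Fin d → lpC p), x ≠ 0 :=
    residual_of_dense_open isOpen_compl_singleton (dense_compl_singleton 0)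
  obtain ⟨x, hx, hx0⟩ := (dense_of_mem_residual (h.and ne_zero)).nonempty
  refine ⟨NonUnitalAlgebra.adjoin ℂ {x}, zero_mem _, fun _ ha _ hb => add_mem ha hb,
    fun c _ ha => SMulMemClass.smul_mem c ha,
    fun a ha b hb => ⟨a * b, mul_mem ha hb, fun _ _ => rfl⟩,
    ⟨x, NonUnitalAlgebra.self_mem_adjoin_singleton ℂ x, hx0⟩,
    fun y hy hy0 lam hlam => hx lam hlam y hy hy0⟩

end SequenceSpace

section Schedule

variable {α : ℝ}

/-- A schedule for the set `S`: every point of `S` is assigned one of `N` slots, in such a way that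
points served in close slots are close. The slot is an inverse `α`-Hölder function of the point,
in the scale where the `N` slots have total length `1`. -/
structure IsSchedule {X : Type*} [PseudoMetricSpace X] (S : Set X) (α B : ℝ) (N : ℕ)
    (τ : X → ℕ) : Prop where
  slot_lt : ∀ a ∈ S, τ a < N
  dist_mul_le : ∀ a ∈ S, ∀ a' ∈ S,
    dist a a' * (N : ℝ) ^ α ≤ B * (1 + |(τ a : ℝ) - τ a'|) ^ α

theorem IsSchedule.mono {X : Type*} [PseudoMetricSpace X] {S S' : Set X} {B : ℝ} {N : ℕ}
    {τ : X → ℕ} (hτ : IsSchedule S α B N τ) (h : S' ⊆ S) : IsSchedule S' α B N τ :=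
  ⟨fun a ha => hτ.slot_lt a (h ha), fun a ha a' ha' => hτ.dist_mul_le a (h ha) a' (h ha')⟩

theorem IsSchedule.comp_of_dist_le {X Y : Type*} [PseudoMetricSpace X] [PseudoMetricSpace Y]
    {S : Set X} {S' : Set Y} {B r : ℝ} {N : ℕ} {τ : X → ℕ} (hτ : IsSchedule S α B N τ)
    (hr : 0 ≤ r) {f : Y → X} (hf : Set.MapsTo f S' S)
    (hdist : ∀ y ∈ S', ∀ y' ∈ S', dist y y' ≤ r * dist (f y) (f y')) :
    IsSchedule S' α (r * B) N (τ ∘ f) where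
  slot_lt y hy := hτ.slot_lt _ (hf hy)
  dist_mul_le y hy y' hy' := by
    calc dist y y' * (N : ℝ) ^ α ≤ r * dist (f y) (f y') * (N : ℝ) ^ α := by
          gcongr
          exact hdist y hy y' hy'
      _ = r * (dist (f y) (f y') * (N : ℝ) ^ α) := mul_assoc _ _ _
      _ ≤ r * (B * (1 + |(τ (f y) : ℝ) - τ (f y')|) ^ α) :=
          mul_le_mul_of_nonneg_left (hτ.dist_mul_le _ (hf hy) _ (hf hy')) hr
      _ = _ := (mul_assoc _ _ _).symm

variable {ι : Type*}

/-- The half-open cube `[0, 1)^ι`. -/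
abbrev unitCube (ι : Type*) : Set (ι → ℝ) :=
  Set.univ.pi fun _ => Set.Ico 0 1

/-- The cell of index `c` of the grid of mesh `r`. -/
def gridCell (r : ℝ) (c : ι → ℤ) : Set (ι → ℝ) :=
  {a | ∀ i, ⌊a i / r⌋ = c i}

theorem exists_digit {b : ℕ} (hb : 1 ≤ b) {x : ℝ} (hx : x ∈ Set.Ico (0 : ℝ) 1) :
    ∃ e : Fin b, b * x - e ∈ Set.Ico (0 : ℝ) 1 := by
  obtain ⟨h0, h1⟩ := hx
  have hb0 : (0 : ℝ) < b := by exact_mod_cast hb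
  have hbx : 0 ≤ b * x := by positivity
  refine ⟨⟨⌊b * x⌋₊, (Nat.floor_lt hbx).2 (by nlinarith)⟩, ?_, ?_⟩
  · linarith [Nat.floor_le hbx]
  · linarith [Nat.lt_floor_add_one (b * x)]

theorem exists_digits {b : ℕ} (hb : 1 ≤ b) (a : ι → ℝ) :
    ∃ e : ι → Fin b, a ∈ unitCube ι → (fun i => b * a i - e i) ∈ unitCube ι := by
  by_cases ha : a ∈ unitCube ι
  · choose e he using fun i => exists_digit hb (ha i (Set.mem_univ i))
    exact ⟨e, fun _ i _ => he i⟩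
  · exact ⟨fun _ => ⟨0, hb⟩, fun h => absurd h ha⟩

variable [Fintype ι]

theorem dist_le_one_of_mem_cube {a a' : ι → ℝ} (ha : a ∈ unitCube ι)
    (ha' : a' ∈ unitCube ι) : dist a a' ≤ 1 := by
  refine (dist_pi_le_iff zero_le_one).2 fun i => ?_
  obtain ⟨h0, h1⟩ := ha i (Set.mem_univ i)
  obtain ⟨h0', h1'⟩ := ha' i (Set.mem_univ i)
  exact abs_sub_le_iff.2 ⟨by linarith, by linarith⟩

theorem exists_base_rpow_le {k : ℕ} (h : α * k < 1) :
    ∃ b : ℕ, 1 ≤ b ∧ ((2 * b ^ k : ℕ) : ℝ) ^ α ≤ b := by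
  have htop : Tendsto (fun b : ℕ => (b : ℝ) ^ (1 - α * k)) atTop atTop :=
    (tendsto_rpow_atTop (by linarith)).comp tendsto_natCast_atTop_atTop
  obtain ⟨b, hb, hb1⟩ :=
    ((htop.eventually_ge_atTop ((2 : ℝ) ^ α)).and (eventually_ge_atTop 1)).exists
  have hb0 : (0 : ℝ) < b := by exact_mod_cast hb1
  refine ⟨b, hb1, ?_⟩
  calc ((2 * b ^ k : ℕ) : ℝ) ^ α = (2 : ℝ) ^ α * (b : ℝ) ^ (k * α) := by
        push_cast
        rw [Real.mul_rpow zero_le_two (by positivity), Real.rpow_mul hb0.le, Real.rpow_natCast]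
    _ ≤ (b : ℝ) ^ (1 - α * k) * (b : ℝ) ^ (k * α) := by gcongr
    _ = b := by rw [← Real.rpow_add hb0, show 1 - α * k + k * α = 1 by ring, Real.rpow_one]

theorem le_abs_sub_of_ne {N s s' : ℕ} {n n' : ℕ} (hs : s < N) (hs' : s' < N) (hn : n ≠ n') :
    (N : ℝ) ≤ |((2 * N * n + s : ℕ) : ℝ) - ((2 * N * n' + s' : ℕ) : ℝ)| := by
  wlog hlt : n < n' generalizing n n' s s'
  · rw [abs_sub_comm]
    exact this hs' hs hn.symm (lt_of_le_of_ne (not_lt.1 hlt) hn.symm)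
  have : N + (2 * N * n + s) ≤ 2 * N * n' + s' := by nlinarith
  have : (N : ℝ) + ((2 * N * n + s : ℕ) : ℝ) ≤ ((2 * N * n' + s' : ℕ) : ℝ) := by exact_mod_cast this
  rw [abs_sub_comm]
  exact (le_sub_iff_add_le.2 this).trans (le_abs_self _)

/-- One step of the construction cuts the cube into `b ^ card ι` subcubes and runs `τ` in each of
them, leaving `N` empty slots between two runs. -/
theorem IsSchedule.exists_subdivision {b N : ℕ} {τ : (ι → ℝ) → ℕ} (hα : 0 ≤ α) (hb : 1 ≤ b)
    (hbα : ((2 * b ^ Fintype.card ι : ℕ) : ℝ) ^ α ≤ b) (hτ : IsSchedule (unitCube ι) α b N τ) :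
    ∃ τ' : (ι → ℝ) → ℕ, IsSchedule (unitCube ι) α b (2 * b ^ Fintype.card ι * N) τ' := by
  classical
  choose e he using exists_digits (ι := ι) hb
  let enc : (ι → Fin b) ≃ Fin (b ^ Fintype.card ι) := Fintype.equivFinOfCardEq (by simp)
  let rest (a : ι → ℝ) (i : ι) : ℝ := b * a i - e a i
  refine ⟨fun a => 2 * N * enc (e a) + τ (rest a), fun a ha => ?_, fun a ha a' ha' => ?_⟩
  · have := hτ.slot_lt _ (he a ha)
    nlinarith [(enc (e a)).2]
  rw [Nat.cast_mul, Real.mul_rpow (Nat.cast_nonneg _) (Nat.cast_nonneg _)]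
  set H : ℝ := ((2 * b ^ Fintype.card ι : ℕ) : ℝ) ^ α
  rcases eq_or_ne (e a) (e a') with heq | hne
  · have dist_rest : dist (rest a) (rest a') = b * dist a a' := by
      have : rest a - rest a' = (b : ℝ) • (a - a') := by
        ext i
        simp only [rest, heq, Pi.sub_apply, Pi.smul_apply, smul_eq_mul]
        ring
      rw [dist_eq_norm, dist_eq_norm, this, norm_smul, Real.norm_natCast]
    calc dist a a' * (H * (N : ℝ) ^ α) ≤ dist a a' * (b * (N : ℝ) ^ α) := by gcongr
      _ = dist (rest a) (rest a') * (N : ℝ) ^ α := by rw [dist_rest]; ring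
      _ ≤ b * (1 + |(τ (rest a) : ℝ) - τ (rest a')|) ^ α :=
        hτ.dist_mul_le _ (he a ha) _ (he a' ha')
      _ = _ := by simp only [heq, Nat.cast_add, add_sub_add_left_eq_sub]
  · have gap := le_abs_sub_of_ne (hτ.slot_lt _ (he a ha)) (hτ.slot_lt _ (he a' ha'))
      fun h => hne (enc.injective (Fin.ext h))
    calc dist a a' * (H * (N : ℝ) ^ α) ≤ 1 * (b * (N : ℝ) ^ α) := by
          gcongr
          exact dist_le_one_of_mem_cube ha ha'
      _ = b * (N : ℝ) ^ α := one_mul _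
      _ ≤ _ := by
        gcongr
        exact gap.trans (le_add_of_nonneg_left zero_le_one)

theorem exists_isSchedule (hα : 0 ≤ α) (h : α * Fintype.card ι < 1) :
    ∃ B > 0, ∀ N₀, ∃ N ≥ N₀, ∃ τ : (ι → ℝ) → ℕ, IsSchedule (unitCube ι) α B N τ := by
  obtain ⟨b, hb, hbα⟩ := exists_base_rpow_le h
  have hb1 : (1 : ℝ) ≤ b := by exact_mod_cast hb
  refine ⟨b, by positivity, fun N₀ => ⟨(2 * b ^ Fintype.card ι) ^ N₀, ?_, ?_⟩⟩
  · have : 1 ≤ b ^ Fintype.card ι := Nat.one_le_pow _ _ hb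
    exact (Nat.lt_pow_self (by omega)).le
  · induction N₀ with
    | zero =>
      refine ⟨fun _ => 0, fun _ _ => by simp, fun a ha a' ha' => ?_⟩
      simpa using (dist_le_one_of_mem_cube ha ha').trans hb1
    | succ J ih =>
      obtain ⟨τ, hτ⟩ := ih
      rw [pow_succ']
      exact hτ.exists_subdivision hα hb hbα

theorem exists_isSchedule_gridCell (hα : 0 ≤ α) (h : α * Fintype.card ι < 1) {B : ℝ}
    (hB : 0 < B) :
    ∃ r > 0, ∀ (c : ι → ℤ) (N₀ : ℕ), ∃ N ≥ N₀, ∃ τ, IsSchedule (gridCell r c) α B N τ := by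
  obtain ⟨B', hB', hcube⟩ := exists_isSchedule (ι := ι) hα h
  have hr : 0 < B / B' := by positivity
  refine ⟨B / B', hr, fun c N₀ => ?_⟩
  obtain ⟨N, hN, τ, hτ⟩ := hcube N₀
  refine ⟨N, hN, _, div_mul_cancel₀ B hB'.ne' ▸ hτ.comp_of_dist_le hr.le
    (f := fun (a : ι → ℝ) i => Int.fract (a i / (B / B')))
    (fun a _ i _ => ⟨Int.fract_nonneg _, Int.fract_lt_one _⟩) fun a ha a' ha' => ?_⟩
  refine (dist_pi_le_iff (by positivity)).2 fun i => ?_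
  calc dist (a i) (a' i)
      = B / B' * dist (Int.fract (a i / (B / B'))) (Int.fract (a' i / (B / B'))) := by
        rw [Int.fract, Int.fract, ha i, ha' i, dist_sub_right, Real.dist_eq, Real.dist_eq,
          ← sub_div, abs_div, abs_of_pos hr, mul_div_cancel₀ _ hr.ne']
    _ ≤ _ := by
        gcongr
        exact dist_le_pi_dist (fun i => Int.fract (a i / (B / B')))
          (fun i => Int.fract (a' i / (B / B'))) i

end Schedule

section Weights

/-- The product `w₁(a) ⋯ wₙ(a)` of the first `n` weights. -/
def weightProd (w : ℝ → ℕ → ℝ) (a : ℝ) (n : ℕ) : ℝ :=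
  ∏ i ∈ Icc 1 n, w a i

/-- The products `W a n` of weights, `a ∈ K`, are continuous in `a`, grow at least like the
stretched exponential `exp (D₃ n ^ α)`, and their logarithms have Lipschitz constants of order
`n ^ α`, both for `n ≥ N₀`. -/
structure HasStretchedGrowth (α D₁ D₂ D₃ : ℝ) (N₀ : ℕ) (K : Set ℝ) (W : ℝ → ℕ → ℝ) : Prop where
  lip_pos : 0 < D₁
  mul_pos : 0 < D₂
  rate_pos : 0 < D₃
  pos : ∀ a ∈ K, ∀ n, 0 < W a n
  continuousOn : ∀ n, ContinuousOn (fun a => W a n) K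
  abs_log_sub_le : ∀ n ≥ N₀, ∀ a ∈ K, ∀ b ∈ K,
    |Real.log (W a n) - Real.log (W b n)| ≤ D₁ * (n : ℝ) ^ α * |a - b|
  le : ∀ n ≥ N₀, ∀ a ∈ K, D₂ * Real.exp (D₃ * (n : ℝ) ^ α) ≤ W a n

theorem summable_exp_neg_mul_rpow {α c : ℝ} (hα : 0 < α) (hc : 0 < c) :
    Summable fun n : ℕ => Real.exp (-c * (n : ℝ) ^ α) := by
  have htop : Tendsto (fun n : ℕ => (n : ℝ) ^ α) atTop atTop :=
    (tendsto_rpow_atTop hα).comp tendsto_natCast_atTop_atTop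
  have hO := ((isLittleO_exp_neg_mul_rpow_atTop hc (-(2 / α))).comp_tendsto htop).isBigO
  refine summable_of_isBigO_nat (Real.summable_nat_rpow.2 (by norm_num : (-2 : ℝ) < -1))
    (hO.congr_right fun n => ?_)
  rw [Function.comp_apply, ← Real.rpow_mul (Nat.cast_nonneg n), mul_neg, mul_div_cancel₀ _ hα.ne']

theorem exists_sum_exp_neg_mul_rpow_le {α c ε : ℝ} (hα : 0 < α) (hc : 0 < c) (hε : 0 < ε) :
    ∃ Q : ℕ, ∀ t : Finset ℕ, (∀ n ∈ t, Q ≤ n) → ∑ n ∈ t, Real.exp (-c * (n : ℝ) ^ α) ≤ ε := by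
  obtain ⟨s, hs⟩ := summable_iff_vanishing_norm.1 (summable_exp_neg_mul_rpow hα hc) ε hε
  refine ⟨s.sup id + 1, fun t ht => (le_abs_self _).trans (hs t ?_).le⟩
  exact disjoint_left.2 fun n hnt hns =>
    (ht n hnt).not_gt (Nat.lt_succ_of_le (le_sup (f := id) hns))

theorem abs_div_mul_div_sub_one_le {a b c e η : ℝ} (ha : 0 < a) (hb : 0 < b) (hc : 0 < c)
    (he : 0 < e) (hae : |Real.log a - Real.log e| ≤ η / 2)
    (hbc : |Real.log b - Real.log c| ≤ η / 2) (hη : η ≤ 1) :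
    |a / b * (c / e) - 1| ≤ 2 * η := by
  have habs : |Real.log a - Real.log e - (Real.log b - Real.log c)| ≤ η := by
    linarith [abs_sub (Real.log a - Real.log e) (Real.log b - Real.log c)]
  have hexp : a / b * (c / e) =
      Real.exp (Real.log a - Real.log e - (Real.log b - Real.log c)) := by
    rw [Real.exp_sub, Real.exp_sub, Real.exp_sub, Real.exp_log ha, Real.exp_log hb,
      Real.exp_log hc, Real.exp_log he]
    field_simp
  rw [hexp]
  exact (Real.abs_exp_sub_one_le (habs.trans hη)).trans (by gcongr)

namespace HasStretchedGrowth

variable {α D₁ D₂ D₃ : ℝ} {N₀ : ℕ} {K : Set ℝ} {W : ℝ → ℕ → ℝ}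

theorem abs_log_sub_le_of_le (hW : HasStretchedGrowth α D₁ D₂ D₃ N₀ K W) (hα : 0 ≤ α)
    {n q N : ℕ} (hn : N₀ ≤ n) (hnq : n ≤ q * N) {a b x : ℝ} (ha : a ∈ K) (hb : b ∈ K)
    (hx : |a - b| * (N : ℝ) ^ α ≤ x) :
    |Real.log (W a n) - Real.log (W b n)| ≤ D₁ * (q : ℝ) ^ α * x := by
  have := hW.lip_pos
  calc |Real.log (W a n) - Real.log (W b n)| ≤ D₁ * (n : ℝ) ^ α * |a - b| :=
        hW.abs_log_sub_le n hn a ha b hb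
    _ ≤ D₁ * ((q : ℝ) * N) ^ α * |a - b| := by
        gcongr
        exact_mod_cast hnq
    _ = D₁ * (q : ℝ) ^ α * (|a - b| * (N : ℝ) ^ α) := by
        rw [Real.mul_rpow (Nat.cast_nonneg _) (Nat.cast_nonneg _)]
        ring
    _ ≤ _ := by gcongr

theorem div_le (hW : HasStretchedGrowth α D₁ D₂ D₃ N₀ K W) {n : ℕ} (hn : N₀ ≤ n) {a x : ℝ}
    (ha : a ∈ K) (hx : 0 ≤ x) :
    x / W a n ≤ x / D₂ * Real.exp (-D₃ * (n : ℝ) ^ α) := by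
  have := hW.mul_pos
  have hle := hW.le n hn a ha
  calc x / W a n ≤ x / (D₂ * Real.exp (D₃ * (n : ℝ) ^ α)) := by gcongr
    _ = _ := by rw [neg_mul, Real.exp_neg]; field_simp

theorem div_mul_div_le (hW : HasStretchedGrowth α D₁ D₂ D₃ N₀ K W) (hα : 0 ≤ α) {q j n k : ℕ}
    (hn : N₀ ≤ n) (hnj : n ≤ j) {a b : ℝ} (ha : a ∈ K) (hb : b ∈ K)
    (hlog : |Real.log (W a q) - Real.log (W b q)| ≤ D₃ / 2 * (n : ℝ) ^ α) :
    W a q / W a j * (W b k / W b q) ≤ Real.exp (-(D₃ / 2) * (n : ℝ) ^ α) / D₂ * W b k := by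
  have hD₂ := hW.mul_pos
  have hD₃ := hW.rate_pos
  have haq := hW.pos a ha q
  have hbq := hW.pos b hb q
  have hbk := hW.pos b hb k
  have haj := hW.pos a ha j
  have ratio_le : W a q / W b q ≤ Real.exp (D₃ / 2 * (n : ℝ) ^ α) := by
    rw [← Real.exp_log (div_pos haq hbq), Real.log_div haq.ne' hbq.ne']
    exact Real.exp_le_exp.2 ((le_abs_self _).trans hlog)
  calc W a q / W a j * (W b k / W b q) = W a q / W b q * (1 / W a j) * W b k := by ring
    _ ≤ Real.exp (D₃ / 2 * (n : ℝ) ^ α) * (1 / D₂ * Real.exp (-D₃ * (n : ℝ) ^ α)) * W b k := by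
        have hjα : Real.exp (-D₃ * (j : ℝ) ^ α) ≤ Real.exp (-D₃ * (n : ℝ) ^ α) := by
          simp only [neg_mul]
          gcongr
        have := (hW.div_le (hn.trans hnj) ha zero_le_one).trans
          (mul_le_mul_of_nonneg_left hjα (by positivity))
        gcongr
    _ = Real.exp (D₃ / 2 * (n : ℝ) ^ α + -D₃ * (n : ℝ) ^ α) / D₂ * W b k := by
        rw [Real.exp_add]
        ring
    _ = _ := by ring_nf

theorem exists_forall_abs_log_sub_le (hW : HasStretchedGrowth α D₁ D₂ D₃ N₀ K W)
    (hK : IsCompact K) (L : ℕ) {η : ℝ} (hη : 0 < η) :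
    ∃ ρ > 0, ∀ k < L, ∀ a ∈ K, ∀ b ∈ K, |a - b| ≤ ρ →
      |Real.log (W a k) - Real.log (W b k)| ≤ η := by
  have hcont : ContinuousOn (fun a (k : Fin L) => Real.log (W a k)) K :=
    continuousOn_pi.2 fun k => (hW.continuousOn k).log fun a ha => (hW.pos a ha k).ne'
  obtain ⟨ρ, hρ, h⟩ :=
    Metric.uniformContinuousOn_iff_le.1 (hK.uniformContinuousOn_of_continuous hcont) η hη
  exact ⟨ρ, hρ, fun k hk a ha b hb hab =>
    (dist_pi_le_iff hη.le).1 (h a ha b hb hab) ⟨k, hk⟩⟩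

theorem exists_sum_mul_le (hW : HasStretchedGrowth α D₁ D₂ D₃ N₀ K W) (hK : IsCompact K)
    {ι : Type*} [Finite ι] (L : ℕ) (v : ι → ℕ → ℝ) :
    ∃ M > 0, ∀ a ∈ K, ∀ i, ∑ k ∈ range L, W a k * v i k ≤ M := by
  have := Fintype.ofFinite ι
  have hcont : ContinuousOn (fun a i => ∑ k ∈ range L, W a k * v i k) K :=
    continuousOn_pi.2 fun i => continuousOn_finsetSum _ fun k _ =>
      (hW.continuousOn k).mul continuousOn_const
  obtain ⟨M, hM⟩ := hK.exists_bound_of_continuousOn hcont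
  refine ⟨max M 1, by positivity, fun a ha i => (le_abs_self _).trans ?_⟩
  exact (norm_le_pi_norm (fun i => ∑ k ∈ range L, W a k * v i k) i).trans
    ((hM a ha).trans (le_max_left _ _))

end HasStretchedGrowth

end Weights

section Shifts

open scoped CoordinatewiseProduct

variable {p : ℝ≥0∞} [Fact (1 ≤ p)] {d : ℕ} {w : ℝ → ℕ → ℝ} {lam μ : Fin d → ℝ}
  {T : (Fin d → lpC p) →L[ℂ] (Fin d → lpC p)}

theorem weightProd_succ (a : ℝ) (n : ℕ) : weightProd w a (n + 1) = weightProd w a n * w a (n + 1) :=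
  prod_Icc_succ_top (by omega) _

theorem IsProductShift.pow_apply (hT : IsProductShift p d w T lam)
    (hw : ∀ i n, weightProd w (lam i) n ≠ 0) (n : ℕ) (y : Fin d → lpC p) (i : Fin d) (j : ℕ) :
    (T ^ n) y i j =
      ((weightProd w (lam i) (n + j) / weightProd w (lam i) j : ℝ) : ℂ) * y i (n + j) := by
  induction n generalizing j with
  | zero => simp only [zero_add, div_self (hw i j), Complex.ofReal_one, one_mul]; rfl
  | succ n ih =>
    have hj := hw i j
    have hwj : w (lam i) (j + 1) ≠ 0 := fun h => hw i (j + 1) (by rw [weightProd_succ, h, mul_zero])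
    rw [pow_succ', mul_apply_eq_comp, hT, ih, ← mul_assoc, ← Complex.ofReal_mul,
      weightProd_succ (lam i) j, show n + (j + 1) = n + 1 + j by ring]
    congr 2
    field_simp

/-- The image of the truncation of `v` at `L` under the right inverse of the `t`-th power of the
product shift with parameter `μ`. -/
def shiftBlock (w : ℝ → ℕ → ℝ) (μ : Fin d → ℝ) (t L : ℕ) (v : Fin d → lpC p) : Fin d → lpC p :=
  fun i => truncate p (fun q => if t ≤ q then
    ((weightProd w (μ i) (q - t) / weightProd w (μ i) q : ℝ) : ℂ) * v i (q - t) else 0) (t + L)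

theorem shiftBlock_apply_add {t L k : ℕ} (hk : k < L) (v : Fin d → lpC p) (i : Fin d) :
    shiftBlock w μ t L v i (t + k) =
      ((weightProd w (μ i) k / weightProd w (μ i) (t + k) : ℝ) : ℂ) * v i k := by
  rw [shiftBlock, truncate_apply, if_pos (by omega), if_pos (by omega), Nat.add_sub_cancel_left]

theorem shiftBlock_apply_eq_zero {t L q : ℕ} (hq : q ∉ Ico t (t + L)) (v : Fin d → lpC p)
    (i : Fin d) : shiftBlock w μ t L v i q = 0 := by
  rw [mem_Ico, not_and] at hq
  rw [shiftBlock, truncate_apply]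
  by_cases htq : t ≤ q
  · rw [if_neg (hq htq)]
  · rw [if_neg htq, ite_self]

theorem norm_shiftBlock_apply_le {t L k : ℕ} (hk : k < L) {v : Fin d → lpC p} {i : Fin d} {M : ℝ}
    (hM : ∑ k ∈ range L, weightProd w (μ i) k * ‖v i k‖ ≤ M)
    (hμ : ∀ n, 0 < weightProd w (μ i) n) :
    ‖shiftBlock w μ t L v i (t + k)‖ ≤ M / weightProd w (μ i) (t + k) := by
  rw [shiftBlock_apply_add hk, norm_mul, Complex.norm_real, Real.norm_of_nonneg (by
    have := hμ k; have := hμ (t + k); positivity), div_mul_eq_mul_div]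
  have := hμ (t + k)
  gcongr
  refine le_trans ?_ hM
  exact single_le_sum (f := fun k => weightProd w (μ i) k * ‖v i k‖)
    (fun k _ => mul_nonneg (hμ k).le (norm_nonneg _)) (mem_range.2 hk)

namespace IsProductShift

theorem pow_shiftBlock_eq_zero (hT : IsProductShift p d w T lam)
    (hlam : ∀ i n, weightProd w (lam i) n ≠ 0) {t L n : ℕ} (hn : t + L ≤ n)
    (v : Fin d → lpC p) : (T ^ n) (shiftBlock w μ t L v) = 0 := by
  ext i j
  rw [hT.pow_apply hlam, shiftBlock_apply_eq_zero (by simp only [mem_Ico]; omega), mul_zero]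
  rfl

theorem norm_pow_shiftBlock_sub_le (hT : IsProductShift p d w T lam)
    (hlam : ∀ i n, weightProd w (lam i) n ≠ 0) {t L : ℕ} {v : Fin d → lpC p}
    (hv : ∀ i, ∀ k ≥ L, v i k = 0) {η : ℝ} (hη : 0 ≤ η)
    (hratio : ∀ i, ∀ k < L, |weightProd w (lam i) (t + k) / weightProd w (lam i) k *
      (weightProd w (μ i) k / weightProd w (μ i) (t + k)) - 1| ≤ η) :
    ‖(T ^ t) (shiftBlock w μ t L v) - v‖ ≤ η * ‖v‖ := by
  refine norm_le_mul_norm_of_forall_apply_le hη fun i k => ?_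
  rw [Pi.sub_apply, lp.coeFn_sub, Pi.sub_apply, hT.pow_apply hlam]
  rcases lt_or_ge k L with hk | hk
  · rw [shiftBlock_apply_add hk, ← mul_assoc, ← sub_one_mul, norm_mul, ← Complex.ofReal_mul,
      ← Complex.ofReal_one, ← Complex.ofReal_sub, Complex.norm_real]
    gcongr
    exact hratio i k hk
  · rw [shiftBlock_apply_eq_zero (by simp only [mem_Ico]; omega), hv i k hk, mul_zero, sub_zero,
      norm_zero, mul_zero]

theorem norm_pow_shiftBlock_le (hT : IsProductShift p d w T lam)
    (hlam : ∀ i n, 0 < weightProd w (lam i) n) (hμ : ∀ i n, 0 < weightProd w (μ i) n)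
    {t L n : ℕ} (hn : n ≤ t) {v : Fin d → lpC p} {x M : ℝ} (hx : 0 ≤ x) (hM0 : 0 ≤ M)
    (hM : ∀ i, ∑ k ∈ range L, weightProd w (μ i) k * ‖v i k‖ ≤ M)
    (hratio : ∀ i, ∀ k < L, weightProd w (lam i) (t + k) / weightProd w (lam i) (t - n + k) *
      (weightProd w (μ i) k / weightProd w (μ i) (t + k)) ≤ x * weightProd w (μ i) k) :
    ‖(T ^ n) (shiftBlock w μ t L v)‖ ≤ x * M := by
  have hpow := hT.pow_apply fun i n => (hlam i n).ne'
  refine (pi_norm_le_iff_of_nonneg (by positivity)).2 fun i => ?_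
  have support (j : ℕ) (hj : j ∉ (range L).map (addLeftEmbedding (t - n))) :
      (T ^ n) (shiftBlock w μ t L v) i j = 0 := by
    rw [hpow, shiftBlock_apply_eq_zero, mul_zero]
    intro h
    rw [mem_Ico] at h
    exact hj (mem_map.2 ⟨n + j - t, mem_range.2 (by omega), by
      simp only [addLeftEmbedding_apply]; omega⟩)
  have coordinate (k : ℕ) (hk : k < L) : ‖(T ^ n) (shiftBlock w μ t L v) i (t - n + k)‖ ≤
      x * (weightProd w (μ i) k * ‖v i k‖) := by
    have h1 := hlam i (t + k)
    have h2 := hlam i (t - n + k)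
    have h3 := hμ i k
    have h4 := hμ i (t + k)
    rw [hpow, show n + (t - n + k) = t + k by omega, shiftBlock_apply_add hk, ← mul_assoc,
      norm_mul, ← Complex.ofReal_mul, Complex.norm_real, Real.norm_of_nonneg (by positivity),
      ← mul_assoc]
    exact mul_le_mul_of_nonneg_right (hratio i k hk) (norm_nonneg _)
  calc ‖(T ^ n) (shiftBlock w μ t L v) i‖
      ≤ ∑ k ∈ range L, ‖(T ^ n) (shiftBlock w μ t L v) i (t - n + k)‖ := by
        simpa only [sum_map, addLeftEmbedding_apply] using norm_le_sum_norm_apply support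
    _ ≤ ∑ k ∈ range L, x * (weightProd w (μ i) k * ‖v i k‖) :=
        sum_le_sum fun k hk => coordinate k (mem_range.1 hk)
    _ ≤ x * M := by
        rw [← mul_sum]
        exact mul_le_mul_of_nonneg_left (hM i) hx

end IsProductShift

end Shifts

section Gluing

open scoped CoordinatewiseProduct

variable {p : ℝ≥0∞} [Fact (1 ≤ p)] {d : ℕ} {w : ℝ → ℕ → ℝ} {α D₁ D₂ D₃ : ℝ} {N₀ : ℕ} {K : Set ℝ}
  {lam μ : Fin d → ℝ} {q N L : ℕ} {v : Fin d → lpC p}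

namespace HasStretchedGrowth

theorem norm_shiftBlock_apply_le (hW : HasStretchedGrowth α D₁ D₂ D₃ N₀ K (weightProd w))
    (hμ : ∀ i, μ i ∈ K) {M : ℝ} (hM0 : 0 < M)
    (hM : ∀ i, ∑ k ∈ range L, weightProd w (μ i) k * ‖v i k‖ ≤ M) {t : ℕ} (ht : N₀ ≤ t)
    (i : Fin d) (j : ℕ) :
    ‖shiftBlock w μ t L v i j‖ ≤ M / D₂ * Real.exp (-D₃ * (j : ℝ) ^ α) := by
  have := hW.mul_pos
  by_cases hj : j ∈ Ico t (t + L)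
  · obtain ⟨htj, hjL⟩ := mem_Ico.1 hj
    obtain ⟨k, rfl⟩ := Nat.exists_eq_add_of_le htj
    exact (_root_.norm_shiftBlock_apply_le (by omega) (hM i) (hW.pos _ (hμ i))).trans
      (hW.div_le (by omega) (hμ i) hM0.le)
  · rw [shiftBlock_apply_eq_zero hj, norm_zero]
    positivity

theorem norm_pow_shiftBlock_sub_le (hW : HasStretchedGrowth α D₁ D₂ D₃ N₀ K (weightProd w))
    (hα : 0 ≤ α) {T : (Fin d → lpC p) →L[ℂ] (Fin d → lpC p)} (hT : IsProductShift p d w T lam)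
    (hlam : ∀ i, lam i ∈ K) (hμ : ∀ i, μ i ∈ K) (hv : ∀ i, ∀ k ≥ L, v i k = 0) (hq : N₀ ≤ q)
    (hLq : L ≤ q) {s : ℕ} (hs : s < N) {B η : ℝ} (hη0 : 0 ≤ η) (hη1 : η ≤ 1)
    (hB : D₁ * ((2 * q : ℕ) : ℝ) ^ α * B ≤ η / 2)
    (hdist : ∀ i, |lam i - μ i| * (N : ℝ) ^ α ≤ B)
    (hlog : ∀ i, ∀ k < L, |Real.log (weightProd w (lam i) k) - Real.log (weightProd w (μ i) k)| ≤
      η / 2) :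
    ‖(T ^ (q * (N + s))) (shiftBlock w μ (q * (N + s)) L v) - v‖ ≤ 2 * η * ‖v‖ := by
  have hlam0 (i : Fin d) := hW.pos _ (hlam i)
  have hμ0 (i : Fin d) := hW.pos _ (hμ i)
  refine hT.norm_pow_shiftBlock_sub_le (fun i n => (hlam0 i n).ne') hv (by positivity)
    fun i k hk => abs_div_mul_div_sub_one_le (hlam0 i _) (hlam0 i k) (hμ0 i k) (hμ0 i _) ?_
      (hlog i k hk) hη1
  exact (hW.abs_log_sub_le_of_le hα (by nlinarith) (by nlinarith) (hlam i) (hμ i)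
    (hdist i)).trans hB

theorem norm_pow_shiftBlock_le (hW : HasStretchedGrowth α D₁ D₂ D₃ N₀ K (weightProd w))
    (hα : 0 ≤ α) {T : (Fin d → lpC p) →L[ℂ] (Fin d → lpC p)} (hT : IsProductShift p d w T lam)
    (hlam : ∀ i, lam i ∈ K) (hμ : ∀ i, μ i ∈ K) (hq : N₀ ≤ q) (hLq : L ≤ q) {s Δ : ℕ}
    (hΔ : 1 ≤ Δ) (hs : s + Δ < N) {B M : ℝ} (hB0 : 0 ≤ B) (hB : D₁ * 4 ^ α * B ≤ D₃ / 2)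
    (hdist : ∀ i, |lam i - μ i| * (N : ℝ) ^ α ≤ B * (1 + Δ) ^ α) (hM0 : 0 ≤ M)
    (hM : ∀ i, ∑ k ∈ range L, weightProd w (μ i) k * ‖v i k‖ ≤ M) :
    ‖(T ^ (q * (N + s))) (shiftBlock w μ (q * (N + (s + Δ))) L v)‖ ≤
      Real.exp (-(D₃ / 2) * ((q * Δ : ℕ) : ℝ) ^ α) / D₂ * M := by
  have := hW.lip_pos
  have := hW.mul_pos
  have hgap : q * (N + (s + Δ)) - q * (N + s) = q * Δ := by
    rw [← Nat.mul_sub]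
    congr 1
    omega
  have hΔ' : (1 : ℝ) ≤ Δ := by exact_mod_cast hΔ
  have hlog (i : Fin d) (k : ℕ) (hk : k < L) :
      |Real.log (weightProd w (lam i) (q * (N + (s + Δ)) + k)) -
        Real.log (weightProd w (μ i) (q * (N + (s + Δ)) + k))| ≤
      D₃ / 2 * ((q * Δ : ℕ) : ℝ) ^ α := by
    calc _ ≤ D₁ * ((2 * q : ℕ) : ℝ) ^ α * (B * (1 + Δ) ^ α) :=
          hW.abs_log_sub_le_of_le hα (by nlinarith) (by nlinarith) (hlam i) (hμ i) (hdist i)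
      _ ≤ D₁ * ((2 * q : ℕ) : ℝ) ^ α * (B * (2 * Δ) ^ α) := by
          gcongr
          linarith
      _ = D₁ * (4 : ℝ) ^ α * B * ((q * Δ : ℕ) : ℝ) ^ α := by
          push_cast
          rw [show (4 : ℝ) = 2 * 2 by norm_num, Real.mul_rpow (x := (2 : ℝ)),
            Real.mul_rpow (x := (2 : ℝ)), Real.mul_rpow (x := (2 : ℝ)),
            Real.mul_rpow (x := (q : ℝ))]
          · ring
          all_goals positivity
      _ ≤ _ := by gcongr
  refine hT.norm_pow_shiftBlock_le (fun i => hW.pos _ (hlam i)) (fun i => hW.pos _ (hμ i))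
    (Nat.mul_le_mul_left q (by omega)) (by positivity) hM0 hM fun i k hk => ?_
  exact hW.div_mul_div_le hα (by nlinarith) (by omega) (hlam i) (hμ i) (hlog i k hk)

end HasStretchedGrowth

/-- The sum of the shift blocks of `v` with parameters `μ s`, `s ∈ A`, the block with parameter
`μ s` starting at `q * (N + s)`. -/
def gluedBlocks (w : ℝ → ℕ → ℝ) (μ : ℕ → Fin d → ℝ) (q N : ℕ) (A : Finset ℕ) (L : ℕ)
    (v : Fin d → lpC p) : Fin d → lpC p :=
  ∑ s ∈ A, shiftBlock w (μ s) (q * (N + s)) L v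

variable {μ : ℕ → Fin d → ℝ} {A : Finset ℕ}

theorem gluedBlocks_apply (i : Fin d) (j : ℕ) :
    gluedBlocks w μ q N A L v i j = ∑ s ∈ A, shiftBlock w (μ s) (q * (N + s)) L v i j := by
  rw [gluedBlocks, Finset.sum_apply, lp.coeFn_sum, Finset.sum_apply]

theorem gluedBlocks_apply_eq_zero (hLq : L ≤ q) (hA : ∀ s ∈ A, s < N) (i : Fin d) {j : ℕ}
    (hj : j ∉ Ico (q * N) (2 * q * N)) : gluedBlocks w μ q N A L v i j = 0 := by
  rw [gluedBlocks_apply]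
  refine sum_eq_zero fun s hs => shiftBlock_apply_eq_zero (fun hjs => hj ?_) v i
  have := hA s hs
  rw [mem_Ico] at hjs ⊢
  constructor <;> nlinarith

theorem norm_gluedBlocks_apply_le (hLq : L ≤ q) {i : Fin d} {j : ℕ} {x : ℝ} (hx : 0 ≤ x)
    (h : ∀ s ∈ A, ‖shiftBlock w (μ s) (q * (N + s)) L v i j‖ ≤ x) :
    ‖gluedBlocks w μ q N A L v i j‖ ≤ x := by
  have block_eq_zero (s : ℕ) (hs : s ≠ j / q - N) :
      shiftBlock w (μ s) (q * (N + s)) L v i j = 0 := by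
    refine shiftBlock_apply_eq_zero (fun hj => hs ?_) v i
    rw [mem_Ico] at hj
    rw [Nat.div_eq_of_lt_le (k := N + s) (by linarith) (by nlinarith), Nat.add_sub_cancel_left]
  rw [gluedBlocks_apply]
  by_cases hmem : j / q - N ∈ A
  · rw [sum_eq_single_of_mem _ hmem fun s _ hs => block_eq_zero s hs]
    exact h _ hmem
  · rw [sum_eq_zero fun s hs => block_eq_zero s fun h => hmem (h ▸ hs), norm_zero]
    exact hx

theorem IsProductShift.norm_pow_gluedBlocks_sub_le
    {T : (Fin d → lpC p) →L[ℂ] (Fin d → lpC p)} (hT : IsProductShift p d w T lam)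
    (hlam : ∀ i n, weightProd w (lam i) n ≠ 0) (hLq : L ≤ q) {s : ℕ} (hs : s ∈ A) :
    ‖(T ^ (q * (N + s))) (gluedBlocks w μ q N A L v) - v‖ ≤
      ‖(T ^ (q * (N + s))) (shiftBlock w (μ s) (q * (N + s)) L v) - v‖ +
      ∑ s' ∈ A with s < s', ‖(T ^ (q * (N + s))) (shiftBlock w (μ s') (q * (N + s')) L v)‖ := by
  have later : ∑ s' ∈ A.erase s, (T ^ (q * (N + s))) (shiftBlock w (μ s') (q * (N + s')) L v) =
      ∑ s' ∈ A with s < s', (T ^ (q * (N + s))) (shiftBlock w (μ s') (q * (N + s')) L v) := by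
    refine (sum_subset (fun s' hs' => ?_) fun s' hs' hlt => ?_).symm
    · rw [mem_filter] at hs'
      exact mem_erase.2 ⟨hs'.2.ne', hs'.1⟩
    · rw [mem_erase] at hs'
      have : s' < s := lt_of_le_of_ne
        (not_lt.1 fun h => hlt (mem_filter.2 ⟨hs'.2, h⟩)) hs'.1
      exact hT.pow_shiftBlock_eq_zero hlam (by nlinarith) v
  rw [gluedBlocks, map_sum, ← add_sum_erase A _ hs, later, add_sub_right_comm]
  exact (norm_add_le _ _).trans (by gcongr; exact norm_sum_le _ _)

theorem exists_sum_filter_exp_le {c ε : ℝ} (hα : 0 < α) (hc : 0 < c) (hε : 0 < ε) :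
    ∃ Q : ℕ, ∀ q ≥ Q, 1 ≤ q → ∀ (A : Finset ℕ) (s : ℕ),
      ∑ s' ∈ A with s < s', Real.exp (-c * ((q * (s' - s) : ℕ) : ℝ) ^ α) ≤ ε := by
  obtain ⟨Q, hQ⟩ := exists_sum_exp_neg_mul_rpow_le hα hc hε
  refine ⟨Q, fun q hq hq1 A s => ?_⟩
  have hinj : Set.InjOn (fun s' => q * (s' - s)) (A.filter (s < ·)) := by
    intro s₁ hs₁ s₂ hs₂ heq
    have h₁ := (mem_filter.1 hs₁).2
    have h₂ := (mem_filter.1 hs₂).2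
    have := Nat.eq_of_mul_eq_mul_left hq1 heq
    omega
  rw [← sum_image (f := fun n : ℕ => Real.exp (-c * (n : ℝ) ^ α)) hinj]
  refine hQ _ fun n hn => ?_
  obtain ⟨s', hs', rfl⟩ := mem_image.1 hn
  have := (mem_filter.1 hs').2
  exact hq.trans (Nat.le_mul_of_pos_right q (by omega))

namespace HasStretchedGrowth

theorem exists_norm_shiftBlock_apply_le
    (hW : HasStretchedGrowth α D₁ D₂ D₃ N₀ K (weightProd w)) (hK : IsCompact K) (L : ℕ)
    (v : Fin d → lpC p) :
    ∃ C ≥ 0, ∀ μ : Fin d → ℝ, (∀ i, μ i ∈ K) → ∀ t ≥ N₀, ∀ i j,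
      ‖shiftBlock w μ t L v i j‖ ≤ C * Real.exp (-D₃ * (j : ℝ) ^ α) := by
  have := hW.mul_pos
  obtain ⟨M, hM0, hM⟩ := hW.exists_sum_mul_le hK L fun i k => ‖v i k‖
  exact ⟨M / D₂, by positivity, fun μ hμ t ht =>
    hW.norm_shiftBlock_apply_le hμ hM0 (fun i => hM _ (hμ i) i) ht⟩

theorem exists_norm_pow_shiftBlock_sub_le
    (hW : HasStretchedGrowth α D₁ D₂ D₃ N₀ K (weightProd w)) (hK : IsCompact K) (hα : 0 ≤ α)
    (hv : ∀ i, ∀ k ≥ L, v i k = 0) (hq : N₀ ≤ q) (hLq : L ≤ q) {ε : ℝ} (hε : 0 < ε) :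
    ∃ B > 0, ∀ N : ℕ, ∀ s < N, ∀ lam μ : Fin d → ℝ, (∀ i, lam i ∈ K) → (∀ i, μ i ∈ K) →
      (∀ i, |lam i - μ i| * (N : ℝ) ^ α ≤ B) → ∀ T, IsProductShift p d w T lam →
        ‖(T ^ (q * (N + s))) (shiftBlock w μ (q * (N + s)) L v) - v‖ ≤ ε := by
  obtain ⟨c, hc0, hc⟩ := exists_pos_mul_lt hε (2 * ‖v‖)
  set η := min 1 c
  have hη0 : 0 < η := by positivity
  obtain ⟨ρ, hρ0, hρ⟩ := hW.exists_forall_abs_log_sub_le hK L (half_pos hη0)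
  obtain ⟨B, hB0, hB⟩ := exists_pos_mul_lt (half_pos hη0) (D₁ * ((2 * q : ℕ) : ℝ) ^ α)
  refine ⟨min ρ B, by positivity, fun N s hs lam μ hlam hμ hdist T hT => ?_⟩
  have hN : (1 : ℝ) ≤ (N : ℝ) ^ α :=
    Real.one_le_rpow (by exact_mod_cast Nat.one_le_of_lt hs) hα
  have close (i : Fin d) : |lam i - μ i| ≤ ρ :=
    (le_mul_of_one_le_right (abs_nonneg _) hN).trans ((hdist i).trans (min_le_left _ _))
  calc _ ≤ 2 * η * ‖v‖ :=
        hW.norm_pow_shiftBlock_sub_le hα hT hlam hμ hv hq hLq hs hη0.le (min_le_left _ _) hB.le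
          (fun i => (hdist i).trans (min_le_right _ _))
          fun i k hk => hρ k hk _ (hlam i) _ (hμ i) (close i)
    _ ≤ 2 * ‖v‖ * c := by nlinarith [min_le_right 1 c, norm_nonneg v]
    _ ≤ ε := hc.le

theorem exists_sum_norm_pow_shiftBlock_le
    (hW : HasStretchedGrowth α D₁ D₂ D₃ N₀ K (weightProd w)) (hK : IsCompact K) (hα : 0 < α)
    (L : ℕ) (v : Fin d → lpC p) {ε : ℝ} (hε : 0 < ε) :
    ∃ B > 0, ∃ Q, ∀ q ≥ Q, ∀ (N s : ℕ) (A : Finset ℕ) (lam : Fin d → ℝ) (μ : ℕ → Fin d → ℝ),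
      (∀ i, lam i ∈ K) → (∀ s' ∈ A, s' < N ∧ ∀ i, μ s' i ∈ K ∧
        |lam i - μ s' i| * (N : ℝ) ^ α ≤ B * (1 + |(s : ℝ) - s'|) ^ α) →
      ∀ T, IsProductShift p d w T lam →
        ∑ s' ∈ A with s < s', ‖(T ^ (q * (N + s))) (shiftBlock w (μ s') (q * (N + s')) L v)‖ ≤
          ε := by
  have hD₂ := hW.mul_pos
  obtain ⟨M, hM0, hM⟩ := hW.exists_sum_mul_le hK L fun i k => ‖v i k‖
  obtain ⟨B, hB0, hB⟩ := exists_pos_mul_lt (half_pos hW.rate_pos) (D₁ * 4 ^ α)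
  obtain ⟨Q, hQ⟩ := exists_sum_filter_exp_le (ε := ε * D₂ / M) hα (half_pos hW.rate_pos)
    (by positivity)
  refine ⟨B, hB0, max (max N₀ L) (max 1 Q), fun q hq N s A lam μ hlam hA T hT => ?_⟩
  simp only [ge_iff_le, max_le_iff] at hq
  obtain ⟨⟨hN₀q, hLq⟩, hq1, hQq⟩ := hq
  calc _ ≤ ∑ s' ∈ A with s < s',
        Real.exp (-(D₃ / 2) * ((q * (s' - s) : ℕ) : ℝ) ^ α) / D₂ * M := by
        refine sum_le_sum fun s' hs' => ?_
        obtain ⟨hs'A, hlt⟩ := mem_filter.1 hs'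
        obtain ⟨hs'N, hμ⟩ := hA s' hs'A
        obtain ⟨Δ, rfl⟩ := Nat.exists_eq_add_of_le hlt.le
        rw [Nat.add_sub_cancel_left]
        refine hW.norm_pow_shiftBlock_le hα.le hT hlam (fun i => (hμ i).1) hN₀q hLq (by omega)
          hs'N hB0.le hB.le (fun i => ?_) hM0.le fun i => hM _ (hμ i).1 i
        simpa only [Nat.cast_add, sub_add_cancel_left, abs_neg, Nat.abs_cast] using (hμ i).2
    _ = (∑ s' ∈ A with s < s', Real.exp (-(D₃ / 2) * ((q * (s' - s) : ℕ) : ℝ) ^ α)) / D₂ * M := by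
        rw [sum_div, sum_mul]
    _ ≤ ε * D₂ / M / D₂ * M := by
        gcongr
        exact hQ q hQq hq1 A s
    _ = ε := by field_simp

theorem exists_gluedBlocks (hW : HasStretchedGrowth α D₁ D₂ D₃ N₀ K (weightProd w))
    (hK : IsCompact K) (hα : 0 < α) (hv : ∀ i, ∀ k ≥ L, v i k = 0) {ε : ℝ} (hε : 0 < ε) :
    ∃ B > 0, ∃ C ≥ 0, ∃ q ≥ 1, ∀ S ⊆ {lam : Fin d → ℝ | ∀ i, lam i ∈ K}, ∀ (N : ℕ) σ,
      IsSchedule S α B N σ → ∃ z : Fin d → lpC p,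
        (∀ i, ∀ j ∉ Ico (q * N) (2 * q * N), z i j = 0) ∧
        (∀ i j, ‖z i j‖ ≤ C * Real.exp (-D₃ * (j : ℝ) ^ α)) ∧
        ∀ lam ∈ S, ∃ n ∈ Ico (q * N) (2 * q * N), ∀ T, IsProductShift p d w T lam →
          ‖(T ^ n) z - v‖ ≤ ε := by
  classical
  obtain ⟨C, hC0, hC⟩ := hW.exists_norm_shiftBlock_apply_le hK L v
  obtain ⟨B₁, hB₁, Q, hfar⟩ := hW.exists_sum_norm_pow_shiftBlock_le hK hα L v (half_pos hε)
  set q := max (max N₀ L) (max 1 Q)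
  obtain ⟨B₂, hB₂, hnear⟩ := hW.exists_norm_pow_shiftBlock_sub_le hK hα.le hv
    (q := q) (by omega) (by omega) (half_pos hε)
  refine ⟨min B₁ B₂, by positivity, C, hC0, q, by omega, fun S hS N σ hσ => ?_⟩
  let A : Finset ℕ := {s ∈ range N | ∃ lam ∈ S, σ lam = s}
  have hA (s : ℕ) (hs : s ∈ A) : s < N := mem_range.1 (mem_filter.1 hs).1
  choose! μ hμS hσμ using fun s (hs : s ∈ A) => (mem_filter.1 hs).2
  refine ⟨gluedBlocks w μ q N A L v, fun i j => gluedBlocks_apply_eq_zero (by omega) hA i,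
    fun i j => norm_gluedBlocks_apply_le (by omega) (by positivity) fun s hs =>
      hC _ (hS (hμS s hs)) _ ?_ i j, fun lam hlam => ?_⟩
  · have := hA s hs
    exact (show N₀ ≤ q by omega).trans (Nat.le_mul_of_pos_right q (by omega))
  have hs : σ lam ∈ A := mem_filter.2 ⟨mem_range.2 (hσ.slot_lt lam hlam), lam, hlam, rfl⟩
  have hdist (s : ℕ) (hs : s ∈ A) (i : Fin d) :
      |lam i - μ s i| * (N : ℝ) ^ α ≤ min B₁ B₂ * (1 + |(σ lam : ℝ) - s|) ^ α := by
    have := hσ.dist_mul_le lam hlam _ (hμS s hs)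
    rw [hσμ s hs] at this
    refine le_trans ?_ this
    gcongr
    exact dist_le_pi_dist lam (μ s) i
  have hsN := hA _ hs
  refine ⟨q * (N + σ lam), mem_Ico.2 ⟨by nlinarith, by nlinarith [show 1 ≤ q by omega]⟩,
    fun T hT => ?_⟩
  refine (hT.norm_pow_gluedBlocks_sub_le (fun i n => (hW.pos _ (hS hlam i) n).ne') (by omega)
    hs).trans ((add_le_add ?_ ?_).trans (add_halves ε).le)
  · refine hnear N _ hsN lam _ (hS hlam) (hS (hμS _ hs)) (fun i => ?_) T hT
    refine (hdist _ hs i).trans ?_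
    simp
  · refine hfar q (by omega) N _ A lam μ (hS hlam) (fun s hs => ⟨hA s hs, fun i =>
      ⟨hS (hμS s hs) i, (hdist s hs i).trans ?_⟩⟩) T hT
    gcongr
    exact min_le_left _ _

end HasStretchedGrowth

end Gluing

section Roots

open scoped CoordinatewiseProduct

variable {p : ℝ≥0∞} [Fact (1 ≤ p)] {d : ℕ} {α c C δ : ℝ}

theorem exists_succPow_eq {z : Fin d → lpC p} {b : ℕ} (hz : ∀ i, ∀ j ≥ b, z i j = 0) (m : ℕ) :
    ∃ u : Fin d → lpC p, succPow u m = z := by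
  choose root hroot using fun x : ℂ => IsAlgClosed.exists_pow_nat_eq x m.succ_pos
  refine ⟨fun i => truncate p (fun j => root (z i j)) b, ?_⟩
  ext i j
  rw [succPow_apply, truncate_apply]
  split_ifs with hj
  · exact hroot _
  · rw [hz i j (not_lt.1 hj), zero_pow m.succ_ne_zero]

theorem le_max_mul_exp_of_pow_le {x : ℝ} (m : ℕ) (h : x ^ (m + 1) ≤ C * Real.exp (-c)) :
    x ≤ max 1 C * Real.exp (-(c / (m + 1))) := by
  refine le_of_pow_le_pow_left₀ m.succ_ne_zero (by positivity) (h.trans ?_)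
  rw [mul_pow, ← Real.exp_nat_mul, Nat.cast_add_one, mul_neg, mul_div_cancel₀ _ (by positivity)]
  gcongr
  exact (le_max_right 1 C).trans (le_self_pow₀ (le_max_left 1 C) m.succ_ne_zero)

theorem exists_norm_le_of_apply_le (hα : 0 < α) (hc : 0 < c) (hC : 0 < C) (hδ : 0 < δ) :
    ∃ Q, ∀ a ≥ Q, ∀ (b : ℕ) (u : Fin d → lpC p), (∀ i, ∀ j ∉ Ico a b, u i j = 0) →
      (∀ i j, ‖u i j‖ ≤ C * Real.exp (-c * (j : ℝ) ^ α)) → ‖u‖ ≤ δ := by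
  obtain ⟨Q, hQ⟩ := exists_sum_exp_neg_mul_rpow_le hα hc (div_pos hδ hC)
  refine ⟨Q, fun a ha b u hsupp hu => (pi_norm_le_iff_of_nonneg hδ.le).2 fun i => ?_⟩
  calc ‖u i‖ ≤ ∑ j ∈ Ico a b, ‖u i j‖ := norm_le_sum_norm_apply (hsupp i)
    _ ≤ C * ∑ j ∈ Ico a b, Real.exp (-c * (j : ℝ) ^ α) := by
        rw [mul_sum]
        exact sum_le_sum fun j _ => hu i j
    _ ≤ C * (δ / C) := by
        gcongr
        exact hQ _ fun j hj => ha.trans (mem_Ico.1 hj).1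
    _ = δ := mul_div_cancel₀ δ hC.ne'

theorem exists_succPow_eq_norm_le (hα : 0 < α) (hc : 0 < c) (C : ℝ) (m : ℕ) (hδ : 0 < δ) :
    ∃ Q, ∀ a ≥ Q, ∀ (b : ℕ) (z : Fin d → lpC p), (∀ i, ∀ j ∉ Ico a b, z i j = 0) →
      (∀ i j, ‖z i j‖ ≤ C * Real.exp (-c * (j : ℝ) ^ α)) → ∃ u, succPow u m = z ∧ ‖u‖ ≤ δ := by
  obtain ⟨Q, hQ⟩ := exists_norm_le_of_apply_le (p := p) (d := d) (C := max 1 C) hα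
    (show 0 < c / (m + 1) by positivity) (by positivity) hδ
  refine ⟨Q, fun a ha b z hsupp hz => ?_⟩
  obtain ⟨u, rfl⟩ := exists_succPow_eq
    (fun i j hj => hsupp i j fun h => (mem_Ico.1 h).2.not_ge hj) m
  refine ⟨u, rfl, hQ a ha b u (fun i j hj => ?_) fun i j => ?_⟩
  · exact eq_zero_of_pow_eq_zero ((succPow_apply u m i j).symm.trans (hsupp i j hj))
  · have := hz i j
    rw [succPow_apply, norm_pow, neg_mul] at this
    simpa only [neg_mul, div_mul_eq_mul_div] using le_max_mul_exp_of_pow_le m this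

end Roots

section Density

open scoped CoordinatewiseProduct

variable {p : ℝ≥0∞} [Fact (1 ≤ p)] {d : ℕ} {w : ℝ → ℕ → ℝ} {α D₁ D₂ D₃ : ℝ} {N₀ : ℕ} {K : Set ℝ}

theorem norm_succPow_apply_le (u : Fin d → lpC p) (hu : ‖u‖ ≤ 1) {m k : ℕ} (hmk : m < k)
    (i : Fin d) (j : ℕ) : ‖succPow u k i j‖ ≤ ‖u‖ * ‖succPow u m i j‖ := by
  have huij : ‖u i j‖ ≤ ‖u‖ :=
    (lp.norm_apply_le_norm exponent_ne_zero (u i) j).trans (norm_le_pi_norm u i)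
  simp only [succPow_apply, norm_pow]
  calc ‖u i j‖ ^ (k + 1) ≤ ‖u i j‖ ^ (m + 1 + 1) :=
        pow_le_pow_of_le_one (norm_nonneg _) (huij.trans hu) (by omega)
    _ = ‖u i j‖ * ‖u i j‖ ^ (m + 1) := pow_succ' _ _
    _ ≤ ‖u‖ * ‖u i j‖ ^ (m + 1) := by gcongr

theorem IsProductShift.isolatesPower_add {lam : Fin d → ℝ}
    {T : (Fin d → lpC p) →L[ℂ] (Fin d → lpC p)} (hT : IsProductShift p d w T lam)
    (hlam : ∀ i n, weightProd w (lam i) n ≠ 0) {n m : ℕ} (M : ℕ) {x u v : Fin d → lpC p} {ε : ℝ}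
    (hx : ∀ i, ∀ j ≥ n, x i j = 0) (hv : ‖(T ^ n) (succPow u m) - v‖ < ε) (hu : ‖u‖ ≤ 1)
    (hε : ‖u‖ * (‖v‖ + ε) < ε) : IsolatesPower T (x + u) m M v ε n := by
  have hpow := hT.pow_apply hlam n
  have forget (k : ℕ) : (T ^ n) (succPow (x + u) k) = (T ^ n) (succPow u k) := by
    ext i j
    simp only [hpow, succPow_apply, Pi.add_apply, lp.coeFn_add, hx i (n + j) (by omega), zero_add]
  refine ⟨forget m ▸ hv, fun k hk => ?_⟩
  calc ‖(T ^ n) (succPow (x + u) k)‖ = ‖(T ^ n) (succPow u k)‖ := by rw [forget]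
    _ ≤ ‖u‖ * ‖(T ^ n) (succPow u m)‖ := by
        refine norm_le_mul_norm_of_forall_apply_le (norm_nonneg u) fun i j => ?_
        rw [hpow, hpow, norm_mul, norm_mul, mul_left_comm]
        gcongr
        exact norm_succPow_apply_le u hu (mem_Ioc.1 hk).1 i _
    _ ≤ ‖u‖ * (‖v‖ + ε) := by
        gcongr
        linarith [norm_sub_norm_le ((T ^ n) (succPow u m)) v]
    _ < ε := hε

namespace HasStretchedGrowth

theorem dense_isolatesPower (hp : p ≠ ⊤)
    (hW : HasStretchedGrowth α D₁ D₂ D₃ N₀ K (weightProd w)) (hK : IsCompact K) (hα : 0 < α)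
    (T : (Fin d → ℝ) → ((Fin d → lpC p) →L[ℂ] (Fin d → lpC p)))
    (hT : ∀ lam : Fin d → ℝ, (∀ i, lam i ∈ K) → IsProductShift p d w (T lam) lam)
    (m M : ℕ) {v : Fin d → lpC p} {L : ℕ} (hv : ∀ i, ∀ k ≥ L, v i k = 0) {ε : ℝ} (hε : 0 < ε) :
    ∃ B > 0, ∀ Ω ⊆ {lam : Fin d → ℝ | ∀ i, lam i ∈ K},
      (∀ N', ∃ N ≥ N', ∃ σ, IsSchedule Ω α B N σ) →
      Dense {g | ∃ N, ∀ lam ∈ Ω, ∃ n ∈ Icc 1 N, IsolatesPower (T lam) g m M v ε n} := by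
  obtain ⟨B, hB, C, -, q, hq, hglue⟩ := hW.exists_gluedBlocks hK hα hv (half_pos hε)
  refine ⟨B, hB, fun Ω hΩ hschedule => Dense.of_closure <| (dense_finite_support hp d).mono ?_⟩
  rintro x ⟨L', hx⟩
  refine Metric.mem_closure_iff.2 fun δ hδ => ?_
  obtain ⟨c, hc0, hc⟩ := exists_pos_mul_lt hε (‖v‖ + ε)
  obtain ⟨Q, hroot⟩ := exists_succPow_eq_norm_le (p := p) (d := d) (δ := min (δ / 2) (min 1 c)) hα
    hW.rate_pos C m (by positivity)
  obtain ⟨N, hN, σ, hσ⟩ := hschedule (max (max 1 Q) L')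
  simp only [ge_iff_le, max_le_iff] at hN
  have hNq : N ≤ q * N := Nat.le_mul_of_pos_left N hq
  obtain ⟨z, hsupp, hz, hzT⟩ := hglue Ω hΩ N σ hσ
  obtain ⟨u, rfl, hu⟩ := hroot _ (hN.1.2.trans hNq) _ z hsupp hz
  simp only [le_min_iff] at hu
  refine ⟨x + u, ⟨2 * q * N, fun lam hlam => ?_⟩, ?_⟩
  · obtain ⟨n, hn, hnT⟩ := hzT lam hlam
    rw [mem_Ico] at hn
    refine ⟨n, mem_Icc.2 ⟨by omega, hn.2.le⟩, (hT lam (hΩ hlam)).isolatesPower_add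
      (fun i n => (hW.pos _ (hΩ hlam i) n).ne') M (fun i j hj => hx i j (by omega))
      ((hnT _ (hT lam (hΩ hlam))).trans_lt (half_lt_self hε)) hu.2.1 (hc.trans_le' ?_)⟩
    rw [mul_comm]
    gcongr
    exact hu.2.2
  · rw [dist_self_add_right]
    exact hu.1.trans_lt (half_lt_self hδ)

theorem eventually_residual_dense_orbits (hp : p ≠ ⊤)
    (hW : HasStretchedGrowth α D₁ D₂ D₃ N₀ K (weightProd w)) (hK : IsCompact K) (hα : 0 < α)
    (hαd : α * d < 1) (T : (Fin d → ℝ) → ((Fin d → lpC p) →L[ℂ] (Fin d → lpC p)))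
    (hT : ∀ lam : Fin d → ℝ, (∀ i, lam i ∈ K) → IsProductShift p d w (T lam) lam) :
    ∀ᶠ x in residual (Fin d → lpC p), ∀ lam : Fin d → ℝ, (∀ i, lam i ∈ K) →
      ∀ y ∈ NonUnitalAlgebra.adjoin ℂ {x}, y ≠ 0 →
        Dense (Set.range fun n : ℕ => ((T lam) ^ (n + 1)) y) := by
  have := separableSpace_lpC hp
  refine _root_.eventually_residual_dense_orbits T (S := {lam | ∀ i, lam i ∈ K})
    (dense_finite_support hp d) fun m M v ⟨L, hv⟩ ε hε => ?_
  obtain ⟨B, hB, hdense⟩ := hW.dense_isolatesPower hp hK hα T hT m M hv hε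
  obtain ⟨r, -, hschedule⟩ := exists_isSchedule_gridCell (ι := Fin d) hα.le
    (by rwa [Fintype.card_fin]) hB
  refine ⟨Set.range fun c : Fin d → ℤ => gridCell r c ∩ {lam | ∀ i, lam i ∈ K},
    Set.countable_range _, fun lam hlam => ⟨_, ⟨fun i => ⌊lam i / r⌋, rfl⟩, fun i => rfl, hlam⟩, ?_⟩
  rintro _ ⟨c, rfl⟩
  refine hdense _ Set.inter_subset_right fun N' => ?_
  obtain ⟨N, hN, σ, hσ⟩ := hschedule c N'
  exact ⟨N, hN, σ, hσ.mono Set.inter_subset_left⟩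

end HasStretchedGrowth

theorem exists_hasStretchedGrowth_weightProd {I : Set ℝ}
    (hwpos : ∀ a ∈ I, ∀ n : ℕ, 1 ≤ n → 0 < w a n)
    (hwcont : ∀ n : ℕ, ContinuousOn (fun a => w a n) I)
    (hcrit : ∃ D₁ > (0 : ℝ), ∃ D₂ > (0 : ℝ), ∃ D₃ > (0 : ℝ), ∃ N : ℕ, ∀ n : ℕ, N ≤ n →
        (∀ a ∈ I, ∀ b ∈ I,
          |(∑ i ∈ Finset.Icc 1 n, Real.log (w a i)) -
              ∑ i ∈ Finset.Icc 1 n, Real.log (w b i)| ≤ D₁ * (n : ℝ) ^ α * |a - b|) ∧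
        (∀ a ∈ I, D₂ * Real.exp (D₃ * (n : ℝ) ^ α) ≤ ∏ i ∈ Finset.Icc 1 n, w a i)) :
    ∃ D₁ D₂ D₃ N₀, HasStretchedGrowth α D₁ D₂ D₃ N₀ I (weightProd w) := by
  obtain ⟨D₁, hD₁, D₂, hD₂, D₃, hD₃, N₀, h⟩ := hcrit
  have log_weightProd (a : ℝ) (ha : a ∈ I) (n : ℕ) :
      Real.log (weightProd w a n) = ∑ i ∈ Icc 1 n, Real.log (w a i) :=
    Real.log_prod fun i hi => (hwpos a ha i (mem_Icc.1 hi).1).ne'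
  exact ⟨D₁, D₂, D₃, N₀,
    { lip_pos := hD₁
      mul_pos := hD₂
      rate_pos := hD₃
      pos := fun a ha n => prod_pos fun i hi => hwpos a ha i (mem_Icc.1 hi).1
      continuousOn := fun n => continuousOn_finsetProd _ fun i _ => hwcont i
      abs_log_sub_le := fun n hn a ha b hb => by
        rw [log_weightProd a ha, log_weightProd b hb]
        exact (h n hn).1 a ha b hb
      le := fun n hn => (h n hn).2 }⟩

end Density

section General

open scoped CoordinatewiseProduct

theorem stmt_0_general (d : ℕ) (p : ℝ≥0∞) [Fact (1 ≤ p)] (hp : p ≠ ⊤)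
    (α : ℝ) (hα0 : 0 < α) (hαd : α * d < 1)
    (I : Set ℝ) (hIσ : IsSigmaCompact I)
    (w : ℝ → ℕ → ℝ)
    (hwpos : ∀ a ∈ I, ∀ n : ℕ, 1 ≤ n → 0 < w a n)
    (hwcont : ∀ n : ℕ, ContinuousOn (fun a => w a n) I)
    (hcrit : ∀ I₀ ⊆ I, IsCompact I₀ →
      ∃ D₁ > (0 : ℝ), ∃ D₂ > (0 : ℝ), ∃ D₃ > (0 : ℝ), ∃ N : ℕ, ∀ n : ℕ, N ≤ n →
        (∀ a ∈ I₀, ∀ b ∈ I₀,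
          |(∑ i ∈ Finset.Icc 1 n, Real.log (w a i)) -
              ∑ i ∈ Finset.Icc 1 n, Real.log (w b i)| ≤ D₁ * (n : ℝ) ^ α * |a - b|) ∧
        (∀ a ∈ I₀, D₂ * Real.exp (D₃ * (n : ℝ) ^ α) ≤ ∏ i ∈ Finset.Icc 1 n, w a i))
    (T : (Fin d → ℝ) → ((Fin d → lpC p) →L[ℂ] (Fin d → lpC p)))
    (hT : ∀ lam : Fin d → ℝ, (∀ i, lam i ∈ I) → IsProductShift p d w (T lam) lam) :
    ∀ᶠ x in residual (Fin d → lpC p), ∀ lam : Fin d → ℝ, (∀ i, lam i ∈ I) →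
      ∀ y ∈ NonUnitalAlgebra.adjoin ℂ {x}, y ≠ 0 →
        Dense (Set.range fun n : ℕ => ((T lam) ^ (n + 1)) y) := by
  obtain ⟨K, hK, rfl⟩ := hIσ
  have residual_accumulate (N : ℕ) : ∀ᶠ x in residual (Fin d → lpC p), ∀ lam : Fin d → ℝ,
      (∀ i, lam i ∈ Set.accumulate K N) → ∀ y ∈ NonUnitalAlgebra.adjoin ℂ {x}, y ≠ 0 →
        Dense (Set.range fun n : ℕ => ((T lam) ^ (n + 1)) y) := by
    have hsub : Set.accumulate K N ⊆ ⋃ n, K n := Set.accumulate_subset_iUnion N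
    have hcompact : IsCompact (Set.accumulate K N) := isCompact_accumulate hK N
    obtain ⟨D₁, D₂, D₃, N₀, hW⟩ := exists_hasStretchedGrowth_weightProd
      (fun a ha => hwpos a (hsub ha)) (fun n => (hwcont n).mono hsub) (hcrit _ hsub hcompact)
    exact hW.eventually_residual_dense_orbits hp hcompact hα0 hαd T
      fun lam hlam => hT lam fun i => hsub (hlam i)
  filter_upwards [eventually_countable_forall.2 residual_accumulate] with x hx lam hlam
  choose N hN using fun i => Set.mem_iUnion.1 (hlam i)
  exact hx (univ.sup N) lam fun i =>
    Set.mem_accumulate.2 ⟨N i, le_sup (mem_univ i), hN i⟩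

end General

/-- Corollary 1.1 of the paper (case `X = ℓᵖ(ℕ)`). -/
theorem stmt_0 (d : ℕ) (hd : 1 ≤ d) (p : ℝ≥0∞) [Fact (1 ≤ p)] (hp : p ≠ ⊤)
    (α : ℝ) (hα0 : 0 < α) (hα1 : α < 1 / (d : ℝ))
    (I : Set ℝ) (hIpos : ∀ a ∈ I, 0 < a) (hIσ : IsSigmaCompact I)
    (w : ℝ → ℕ → ℝ)
    (hwpos : ∀ a ∈ I, ∀ n : ℕ, 1 ≤ n → 0 < w a n)
    (hwbdd : ∀ a ∈ I, ∃ C : ℝ, ∀ n : ℕ, 1 ≤ n → w a n ≤ C)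
    (hwcont : ∀ n : ℕ, ContinuousOn (fun a => w a n) I)
    (hcrit : ∀ I₀ ⊆ I, IsCompact I₀ →
      ∃ D₁ > (0 : ℝ), ∃ D₂ > (0 : ℝ), ∃ D₃ > (0 : ℝ), ∃ N : ℕ, ∀ n : ℕ, N ≤ n →
        (∀ a ∈ I₀, ∀ b ∈ I₀,
          |(∑ i ∈ Finset.Icc 1 n, Real.log (w a i)) -
              ∑ i ∈ Finset.Icc 1 n, Real.log (w b i)| ≤ D₁ * (n : ℝ) ^ α * |a - b|) ∧
        (∀ a ∈ I₀, D₂ * Real.exp (D₃ * (n : ℝ) ^ α) ≤ ∏ i ∈ Finset.Icc 1 n, w a i))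
    (T : (Fin d → ℝ) → ((Fin d → lpC p) →L[ℂ] (Fin d → lpC p)))
    (hT : ∀ lam : Fin d → ℝ, (∀ i, lam i ∈ I) → IsProductShift p d w (T lam) lam) :
    CommonHypercyclicAlgebraCW p d {lam | ∀ i, lam i ∈ I} T :=
  commonHypercyclicAlgebraCW_of_residual hd <|
    stmt_0_general d p hp α hα0 ((lt_div_iff₀ (by exact_mod_cast hd)).1 hα1) I hIσ w hwpos hwcont
      hcrit T hT
end
end

section
/- Let d ≥ 1 be an integer, α ∈ (0, 1/d), and let I ⊂ (0,∞) be σ-compact. Let (w(λ))_{λ∈I} be a continuous family of bounded positive weight sequences. Assume that for every compact I₀ ⊂ I there exist D₁, D₂, D₃ > 0 and an integer N ≥ 0 such that for all n ≥ N: (1) the map a ↦ Σ_{i=1}^n log(w_i(a)) is D₁·n^α-Lipschitz on I₀; and (2) inf_{a∈I₀} w_1(a)⋯w_n(a) ≥ D₂·exp(D₃·n^α). Then the family (B_{w(λ₁)} × ⋯ × B_{w(λ_d)})_{λ∈I^d} admits a common hypercyclic algebra on c₀(ℕ)^d for the coordinatewise product. -/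
open scoped ENNReal ZeroAtInfty
open Finset

noncomputable section

/-- The space `c₀(ℕ)` of complex sequences vanishing at infinity, with the sup norm. -/
abbrev c0C : Type := C₀(ℕ, ℂ)

/-- `T` is the product operator `B_{w(lam 0)} × ⋯ × B_{w(lam (d-1))}` of weighted backward
shifts, the weight sequence of the `i`-th factor being `(w (lam i) n)_{n ≥ 1}`. -/
def IsProductShiftC0 (d : ℕ) (w : ℝ → ℕ → ℝ)
    (T : (Fin d → c0C) →L[ℂ] (Fin d → c0C)) (lam : Fin d → ℝ) : Prop :=
  ∀ (v : Fin d → c0C) (i : Fin d) (n : ℕ),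
    (T v) i n = (w (lam i) (n + 1) : ℂ) * v i (n + 1)

/-- The family `T lam`, `lam ∈ S`, admits a common hypercyclic algebra for the coordinatewise
product: there is a non-unital subalgebra `A ≠ {0}` of `(c₀(ℕ))^d` (closed under addition,
scalar multiplication and the componentwise coordinatewise product) every nonzero element of
which is a common hypercyclic vector for the family. -/
def CommonHypercyclicAlgebraCWC0 (d : ℕ) (S : Set (Fin d → ℝ))
    (T : (Fin d → ℝ) → ((Fin d → c0C) →L[ℂ] (Fin d → c0C))) : Prop :=
  ∃ A : Set (Fin d → c0C),
    (0 : Fin d → c0C) ∈ A ∧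
    (∀ x ∈ A, ∀ y ∈ A, x + y ∈ A) ∧
    (∀ (c : ℂ), ∀ x ∈ A, c • x ∈ A) ∧
    (∀ x ∈ A, ∀ y ∈ A, ∃ z ∈ A, ∀ (i : Fin d) (n : ℕ), z i n = x i n * y i n) ∧
    (∃ x ∈ A, x ≠ 0) ∧
    (∀ x ∈ A, x ≠ 0 → ∀ lam ∈ S, Dense (Set.range fun n : ℕ => ((T lam) ^ (n + 1)) x))

/-!
Put `φ l i n = log (w_1 ⋯ w_n)` for the weights of the `i`-th factor at the parameter `l`. For `β`
strictly between `α` and `1 / d`, the parameter space is parametrised by a line: on each small cube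
there is a coordinate `f` with values in `[0, 1]` such that `dist l ν ≤ κ * |f l - f ν| ^ β`,
obtained by interleaving the digits of the `d` coordinates of `l`. One can therefore place the
parameters in finitely many cells along the line and give each cell its own block of coordinates,
on which a single vector `u` carries the preimage of a target `y` under a power of the shift.
Parameters of the same cell have nearly equal potentials on that block, so they all approach `y` at
the same time. A block lying `n` coordinates further perturbs this by a factor at most
`exp (D₃ / 2 * n ^ α)`, because `β > α`, while the shift divides by at least `exp (D₃ * n ^ α)`.

By Baire's theorem, a generic `x` is such that for every parameter and every `m`, every vector is a
cluster point of the orbit of `x ^ (m + 1)`. A nonzero element of the algebra generated by `x` is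
`x ^ (m + 1) * Q(x)` with `Q(0) ≠ 0`, and its orbit is asymptotic to `Q(0)` times that of
`x ^ (m + 1)`.
-/

section HolderCoordinate

lemma ofDigits_add_inv_pow_le {b : ℕ} {a c : ℕ → Fin b} {n : ℕ}
    (heq : ∀ k < n, a k = c k) (hgap : (a n : ℕ) + 2 ≤ c n) :
    Real.ofDigits a + ((b : ℝ) ^ (n + 1))⁻¹ ≤ Real.ofDigits c := by
  have hsum : ∑ k ∈ Finset.range n, Real.ofDigitsTerm a k =
      ∑ k ∈ Finset.range n, Real.ofDigitsTerm c k :=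
    Finset.sum_congr rfl fun k hk => by
      simp only [Real.ofDigitsTerm, heq k (Finset.mem_range.1 hk)]
  have hterm : Real.ofDigitsTerm a n + 2 * ((b : ℝ) ^ (n + 1))⁻¹ ≤ Real.ofDigitsTerm c n := by
    have : ((a n : ℕ) : ℝ) + 2 ≤ (c n : ℕ) := by exact_mod_cast hgap
    simp only [Real.ofDigitsTerm, ← add_mul]
    gcongr
  have htail : ((b : ℝ) ^ (n + 1))⁻¹ * Real.ofDigits (fun k => a (k + (n + 1))) ≤
      ((b : ℝ) ^ (n + 1))⁻¹ :=
    mul_le_of_le_one_right (by positivity) (Real.ofDigits_le_one _)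
  have htail_nonneg : 0 ≤ ((b : ℝ) ^ (n + 1))⁻¹ * Real.ofDigits (fun k => c (k + (n + 1))) :=
    mul_nonneg (by positivity) (Real.ofDigits_nonneg _)
  rw [Real.ofDigits_eq_sum_add_ofDigits a (n + 1), Real.ofDigits_eq_sum_add_ofDigits c (n + 1),
    Finset.sum_range_succ, Finset.sum_range_succ, hsum]
  linarith

lemma inv_pow_le_abs_ofDigits_sub {b : ℕ} {a c : ℕ → Fin b} {n : ℕ}
    (heq : ∀ k < n, a k = c k) (hgap : (a n : ℕ) + 2 ≤ c n ∨ (c n : ℕ) + 2 ≤ a n) :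
    ((b : ℝ) ^ (n + 1))⁻¹ ≤ |Real.ofDigits a - Real.ofDigits c| := by
  rcases hgap with h | h
  · rw [abs_sub_comm]
    exact le_trans (by linarith [ofDigits_add_inv_pow_le heq h]) (le_abs_self _)
  · exact le_trans (by linarith [ofDigits_add_inv_pow_le (fun k hk => (heq k hk).symm) h])
      (le_abs_self _)

lemma exists_two_mul_pow_rpow_le {d : ℕ} {β : ℝ} (hβ0 : 0 < β) (hβ : β < 1 / d) :
    ∃ b : ℕ, 1 < b ∧ ((2 * b ^ d : ℕ) : ℝ) ^ β ≤ b := by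
  have hd : (0 : ℝ) < d := one_div_pos.1 (hβ0.trans hβ)
  have hpos : 0 < 1 - d * β := by
    have := (lt_div_iff₀ hd).1 hβ
    linarith
  have hlim : Filter.Tendsto (fun b : ℕ => (b : ℝ) ^ (1 - d * β)) Filter.atTop Filter.atTop :=
    (tendsto_rpow_atTop hpos).comp tendsto_natCast_atTop_atTop
  obtain ⟨b, hb, hb1⟩ :=
    ((hlim.eventually_ge_atTop (2 ^ β)).and (Filter.eventually_gt_atTop 1)).exists
  have hb0 : (0 : ℝ) < b := by positivity
  refine ⟨b, hb1, ?_⟩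
  calc ((2 * b ^ d : ℕ) : ℝ) ^ β = 2 ^ β * (b : ℝ) ^ (d * β) := by
        push_cast
        rw [Real.mul_rpow (by positivity) (by positivity), ← Real.rpow_natCast,
          ← Real.rpow_mul hb0.le]
    _ ≤ (b : ℝ) ^ (1 - d * β) * (b : ℝ) ^ (d * β) := by gcongr
    _ = b := by rw [← Real.rpow_add hb0, sub_add_cancel, Real.rpow_one]

/-- The digits, in base `2 * b ^ d`, which encode the `b`-adic digits of the `d` coordinates of
`x`. They are all even, so that distinct digits differ by at least `2`. -/
def interleavedDigits {d : ℕ} (b : ℕ) [NeZero b] (x : Fin d → ℝ) (h : ℕ) : Fin (2 * b ^ d) :=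
  ⟨2 * finFunctionFinEquiv fun i => Real.digits (x i) b h, by omega⟩

lemma dist_le_of_interleavedDigits_eq {d b : ℕ} [NeZero b] (hb : 1 < b) {x y : Fin d → ℝ}
    (hx : ∀ i, x i ∈ Set.Ico 0 1) (hy : ∀ i, y i ∈ Set.Ico 0 1) {n : ℕ}
    (h : ∀ k < n, interleavedDigits b x k = interleavedDigits b y k) :
    dist x y ≤ ((b : ℝ) ^ n)⁻¹ := by
  refine (dist_pi_le_iff (by positivity)).2 fun i => ?_
  rw [Real.dist_eq, ← Real.ofDigits_digits hb (hx i), ← Real.ofDigits_digits hb (hy i)]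
  refine Real.abs_ofDigits_sub_ofDigits_le fun k hk => ?_
  have := h k hk
  simp only [interleavedDigits, Fin.mk.injEq, mul_right_inj' two_ne_zero, Fin.val_inj,
    EmbeddingLike.apply_eq_iff_eq] at this
  exact congrFun this i

lemma interleavedDigits_gap {d b : ℕ} [NeZero b] {x y : Fin d → ℝ} {h : ℕ}
    (hne : interleavedDigits b x h ≠ interleavedDigits b y h) :
    (interleavedDigits b x h : ℕ) + 2 ≤ interleavedDigits b y h ∨
      (interleavedDigits b y h : ℕ) + 2 ≤ interleavedDigits b x h := by
  rw [Ne, ← Fin.val_inj] at hne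
  simp only [interleavedDigits] at hne ⊢
  omega

lemma exists_holder_coordinate_unitCube {d : ℕ} {β : ℝ} (hβ0 : 0 < β) (hβ : β < 1 / d) :
    ∃ C > 0, ∃ f : (Fin d → ℝ) → ℝ, (∀ x, f x ∈ Set.Icc 0 1) ∧
      ∀ x y, (∀ i, x i ∈ Set.Ico 0 1) → (∀ i, y i ∈ Set.Ico 0 1) →
        dist x y ≤ C * |f x - f y| ^ β := by
  obtain ⟨b, hb, hbβ⟩ := exists_two_mul_pow_rpow_le hβ0 hβ
  have hb0 : (0 : ℝ) < b := by positivity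
  have : NeZero b := ⟨by omega⟩
  refine ⟨b, hb0, fun x => Real.ofDigits (interleavedDigits b x),
    fun x => ⟨Real.ofDigits_nonneg _, Real.ofDigits_le_one _⟩, fun x y hx hy => ?_⟩
  by_cases hall : ∀ n, interleavedDigits b x n = interleavedDigits b y n
  · have hzero : Filter.Tendsto (fun n : ℕ => ((b : ℝ) ^ n)⁻¹) Filter.atTop (nhds 0) :=
      (tendsto_pow_atTop_atTop_of_one_lt (by exact_mod_cast hb)).inv_tendsto_atTop
    have hdist : dist x y ≤ 0 := ge_of_tendsto' hzero fun n =>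
      dist_le_of_interleavedDigits_eq hb hx hy fun k _ => hall k
    exact hdist.trans (by positivity)
  push Not at hall
  classical
  set n := Nat.find hall
  have hagree : ∀ k < n, interleavedDigits b x k = interleavedDigits b y k := fun k hk =>
    not_not.1 (Nat.find_min hall hk)
  calc dist x y ≤ ((b : ℝ) ^ n)⁻¹ := dist_le_of_interleavedDigits_eq hb hx hy hagree
    _ = b * ((b : ℝ) ^ (n + 1))⁻¹ := by rw [pow_succ]; field_simp
    _ ≤ b * ((((2 * b ^ d : ℕ) : ℝ) ^ β) ^ (n + 1))⁻¹ := by gcongr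
    _ = b * ((((2 * b ^ d : ℕ) : ℝ) ^ (n + 1))⁻¹) ^ β := by
        rw [Real.inv_rpow (by positivity), ← Real.rpow_natCast, ← Real.rpow_natCast,
          ← Real.rpow_mul (by positivity), ← Real.rpow_mul (by positivity), mul_comm β]
    _ ≤ b * |Real.ofDigits (interleavedDigits b x) -
          Real.ofDigits (interleavedDigits b y)| ^ β := by
        gcongr
        exact inv_pow_le_abs_ofDigits_sub hagree (interleavedDigits_gap (Nat.find_spec hall))

lemma exists_holder_coordinate {d : ℕ} {β κ : ℝ} (hβ0 : 0 < β) (hβ : β < 1 / d) (hκ : 0 < κ) :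
    ∃ (cube : (Fin d → ℝ) → (Fin d → ℤ)) (f : (Fin d → ℝ) → ℝ), (∀ x, f x ∈ Set.Icc 0 1) ∧
      ∀ x y, cube x = cube y → dist x y ≤ κ * |f x - f y| ^ β := by
  obtain ⟨C, hC, f, hf, hfβ⟩ := exists_holder_coordinate_unitCube hβ0 hβ
  set ρ := κ / C with hρ
  have hρ0 : 0 < ρ := by positivity
  refine ⟨fun x i => ⌊x i / ρ⌋, fun x => f fun i => Int.fract (x i / ρ), fun x => hf _,
    fun x y hxy => ?_⟩
  have hfract : ∀ z : Fin d → ℝ, ∀ i, Int.fract (z i / ρ) ∈ Set.Ico (0 : ℝ) 1 := fun z i =>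
    ⟨Int.fract_nonneg _, Int.fract_lt_one _⟩
  have hdist : dist x y =
      ρ * dist (fun i => Int.fract (x i / ρ)) (fun i => Int.fract (y i / ρ)) := by
    have hdiff : x - y = ρ •
        ((fun i => Int.fract (x i / ρ)) - fun i => Int.fract (y i / ρ)) := by
      ext i
      have hfloor : ⌊x i / ρ⌋ = ⌊y i / ρ⌋ := congrFun hxy i
      simp only [Pi.sub_apply, Pi.smul_apply, smul_eq_mul, Int.fract, hfloor]
      field_simp
      ring
    rw [dist_eq_norm, hdiff, norm_smul, dist_eq_norm, Real.norm_of_nonneg hρ0.le]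
  calc dist x y ≤ ρ * (C * |_| ^ β) := by
        rw [hdist]
        gcongr
        exact hfβ _ _ (hfract x) (hfract y)
    _ = κ * |_| ^ β := by rw [← mul_assoc, hρ, div_mul_cancel₀ κ hC.ne']

end HolderCoordinate

section NullSequences

variable {ι : Type*}

/-- The element of `c₀(ℕ)` given by a null sequence. -/
def nullSeq (f : ℕ → ℂ) (hf : Filter.Tendsto f Filter.atTop (nhds 0)) : c0C where
  toFun := f
  continuous_toFun := continuous_of_discreteTopology
  zero_at_infty' := by rwa [cocompact_eq_atTop]

@[simp]
lemma nullSeq_apply {f : ℕ → ℂ} (hf : Filter.Tendsto f Filter.atTop (nhds 0)) (n : ℕ) :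
    nullSeq f hf n = f n :=
  rfl

lemma tendsto_zero_of_forall_ge_eq_zero {f : ℕ → ℂ} {p : ℕ} (hf : ∀ n, p ≤ n → f n = 0) :
    Filter.Tendsto f Filter.atTop (nhds 0) :=
  tendsto_const_nhds.congr' <| by
    filter_upwards [Filter.eventually_ge_atTop p] with n hn using (hf n hn).symm

lemma tendsto_apply_atTop (x : c0C) : Filter.Tendsto x Filter.atTop (nhds 0) := by
  simpa only [cocompact_eq_atTop] using zero_at_infty x

lemma exists_forall_norm_apply_le [Finite ι] (x : ι → c0C) {ε : ℝ} (hε : 0 < ε) :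
    ∃ p, ∀ i q, p ≤ q → ‖x i q‖ ≤ ε := by
  have hsmall : ∀ᶠ p in Filter.atTop, ∀ i, ‖x i p‖ ≤ ε :=
    Filter.eventually_all.2 fun i =>
      (tendsto_zero_iff_norm_tendsto_zero.1 (tendsto_apply_atTop (x i))).eventually_le_const hε
  obtain ⟨p, hp⟩ := Filter.eventually_atTop.1 hsmall
  exact ⟨p, fun i q hq => hp q hq i⟩

lemma norm_apply_le_norm [Fintype ι] (x : ι → c0C) (i : ι) (n : ℕ) : ‖x i n‖ ≤ ‖x‖ :=
  ((x i).toBCF.norm_coe_le_norm n).trans (norm_le_pi_norm x i)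

lemma dist_le_of_forall_apply [Fintype ι] {x y : ι → c0C} {ε : ℝ} (hε : 0 ≤ ε)
    (h : ∀ i n, ‖x i n - y i n‖ ≤ ε) : dist x y ≤ ε := by
  refine (dist_pi_le_iff hε).2 fun i => ?_
  rw [← ZeroAtInftyContinuousMap.dist_toBCF_eq_dist]
  refine (BoundedContinuousFunction.dist_le hε).2 fun n => ?_
  rw [dist_eq_norm]
  exact h i n

/-- The vector which agrees with `x` on the coordinates `n < p` and with `u` on the others. -/
def splice (x u : ι → c0C) (p : ℕ) : ι → c0C := fun i =>
  nullSeq (fun n => if n < p then x i n else u i n) <|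
    (tendsto_apply_atTop (u i)).congr' <| by
      filter_upwards [Filter.eventually_ge_atTop p] with n hn
      rw [if_neg hn.not_gt]

lemma splice_apply_of_lt {x u : ι → c0C} {p n : ℕ} (hn : n < p) (i : ι) :
    splice x u p i n = x i n :=
  if_pos hn

lemma splice_apply_of_le {x u : ι → c0C} {p n : ℕ} (hn : p ≤ n) (i : ι) :
    splice x u p i n = u i n :=
  if_neg hn.not_gt

lemma dist_splice_le [Fintype ι] {x u : ι → c0C} {p : ℕ} {ε δ : ℝ} (hε : 0 ≤ ε) (hδ : 0 ≤ δ)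
    (hx : ∀ i q, p ≤ q → ‖x i q‖ ≤ ε) (hu : ∀ i q, p ≤ q → ‖u i q‖ ≤ δ) :
    dist (splice x u p) x ≤ δ + ε := by
  refine dist_le_of_forall_apply (by positivity) fun i n => ?_
  rcases lt_or_ge n p with hn | hn
  · rw [splice_apply_of_lt hn, sub_self, norm_zero]
    positivity
  · rw [splice_apply_of_le hn]
    exact (norm_sub_le _ _).trans (add_le_add (hu i n hn) (hx i n hn))

lemma exists_finitelySupported_dist_le [Fintype ι] (x : ι → c0C) {ε : ℝ} (hε : 0 < ε) :
    ∃ (y : ι → c0C) (p : ℕ), (∀ i q, p ≤ q → y i q = 0) ∧ dist y x ≤ ε := by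
  obtain ⟨p, hp⟩ := exists_forall_norm_apply_le x hε
  refine ⟨splice x 0 p, p, fun i q hq => splice_apply_of_le hq i, ?_⟩
  simpa only [zero_add] using
    dist_splice_le (u := 0) hε.le le_rfl hp fun _ q _ => (norm_zero (E := ℂ)).le

instance : TopologicalSpace.SeparableSpace c0C := by
  let e : ℕ → c0C := fun k =>
    nullSeq (Pi.single k 1) (tendsto_zero_of_forall_ge_eq_zero (p := k + 1) fun n hn =>
      Pi.single_eq_of_ne (by omega) _)
  have hmem : ∀ p : ℕ, ∀ y : c0C, (∀ n, p ≤ n → y n = 0) →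
      y ∈ Submodule.span ℂ (Set.range e) := by
    intro p
    induction p with
    | zero =>
      intro y hy
      rw [show y = 0 from DFunLike.ext _ _ fun n => hy n n.zero_le]
      exact zero_mem _
    | succ p ih =>
      intro y hy
      rw [← sub_add_cancel y (y p • e p)]
      refine add_mem (ih _ fun n hn => ?_)
        (Submodule.smul_mem _ _ (Submodule.subset_span ⟨p, rfl⟩))
      rcases hn.eq_or_lt with rfl | hlt
      · simp [e]
      · simp [e, hy n hlt, hlt.ne']
  refine TopologicalSpace.isSeparable_univ_iff.1
    ((Set.countable_range e).isSeparable.span (R := ℂ) |>.closure.mono fun x _ => ?_)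
  refine Metric.mem_closure_iff.2 fun ε hε => ?_
  obtain ⟨y, p, hy, hyx⟩ := exists_finitelySupported_dist_le (fun _ : Unit => x) (half_pos hε)
  refine ⟨y (), hmem p _ (hy ()), ?_⟩
  rw [dist_comm]
  exact ((dist_le_pi_dist y _ ()).trans hyx).trans_lt (half_lt_self hε)

instance : Nontrivial c0C :=
  ⟨nullSeq (Pi.single 0 1) (tendsto_zero_of_forall_ge_eq_zero (p := 1) fun n hn =>
      Pi.single_eq_of_ne (by omega) _), 0, fun h => by
    simpa using DFunLike.congr_fun h 0⟩

/-- The coordinatewise power `x ^ (m + 1)`; the product of `c₀(ℕ)` has no unit, so the power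
`x ^ 0` is not available. -/
def coordPow : ℕ → (ι → c0C) → ι → c0C
  | 0, x => x
  | m + 1, x => coordPow m x * x

@[simp]
lemma coordPow_apply (m : ℕ) (x : ι → c0C) (i : ι) (n : ℕ) :
    coordPow m x i n = x i n ^ (m + 1) := by
  induction m with
  | zero => simp [coordPow]
  | succ m ih => rw [pow_succ, ← ih]; rfl

lemma continuous_coordPow (m : ℕ) : Continuous (coordPow (ι := ι) m) := by
  induction m with
  | zero => exact continuous_id
  | succ m ih => exact ih.mul continuous_id

end NullSequences

section PotentialShift

variable {ι : Type*}

/-- `T` is the product of the weighted backward shifts whose weights `w_n` are written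
`exp (φ i n - φ i (n - 1))`, so that `φ i n` is, up to an additive constant, the logarithm of
`w_1 ⋯ w_n` for the `i`-th factor. -/
def IsPotentialShift (φ : ι → ℕ → ℝ) (T : (ι → c0C) →L[ℂ] (ι → c0C)) : Prop :=
  ∀ (v : ι → c0C) (i : ι) (n : ℕ), T v i n = Real.exp (φ i (n + 1) - φ i n) • v i (n + 1)

lemma IsPotentialShift.pow_apply {φ : ι → ℕ → ℝ} {T : (ι → c0C) →L[ℂ] (ι → c0C)}
    (hT : IsPotentialShift φ T) (n : ℕ) (v : ι → c0C) (i : ι) (j : ℕ) :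
    (T ^ n) v i j = Real.exp (φ i (j + n) - φ i j) • v i (j + n) := by
  induction n generalizing v with
  | zero => simp
  | succ n ih =>
    rw [pow_succ, mul_apply_eq_comp, ih, hT, smul_smul, ← Real.exp_add, sub_add_sub_cancel',
      add_assoc]

lemma IsProductShiftC0.isPotentialShift {d : ℕ} {w : ℝ → ℕ → ℝ}
    {T : (Fin d → c0C) →L[ℂ] (Fin d → c0C)} {lam : Fin d → ℝ} (hT : IsProductShiftC0 d w T lam)
    (hw : ∀ i n, 1 ≤ n → 0 < w (lam i) n) :
    IsPotentialShift (fun i n => ∑ k ∈ Finset.Icc 1 n, Real.log (w (lam i) k)) T := by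
  intro v i n
  beta_reduce
  rw [hT v i n, Finset.sum_Icc_succ_top (Nat.le_add_left 1 n), add_sub_cancel_left,
    Real.exp_log (hw i _ (Nat.le_add_left 1 n)), Complex.real_smul]

end PotentialShift

section Cells

/-- The cell, among `M, …, 2 * M`, in which a point with coordinate `t ∈ [0, 1]` is placed. -/
def cellIndex (M : ℕ) (t : ℝ) : ℕ := M + ⌊t * M⌋₊

lemma le_cellIndex (M : ℕ) (t : ℝ) : M ≤ cellIndex M t :=
  Nat.le_add_right _ _

lemma cellIndex_le (M : ℕ) {t : ℝ} (ht : t ≤ 1) : cellIndex M t ≤ 2 * M := by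
  have : ⌊t * M⌋₊ ≤ M := Nat.floor_le_of_le (mul_le_of_le_one_left (Nat.cast_nonneg M) ht)
  unfold cellIndex
  omega

lemma abs_sub_le_of_cellIndex_le {M : ℕ} (hM : 0 < M) {t u : ℝ} (ht : 0 ≤ t) (hu : 0 ≤ u)
    (h : cellIndex M t ≤ cellIndex M u) :
    |t - u| ≤ (cellIndex M u - cellIndex M t + 1) / M := by
  have hM' : (0 : ℝ) < M := by exact_mod_cast hM
  have hfloor : (⌊t * M⌋₊ : ℝ) ≤ ⌊u * M⌋₊ := by
    exact_mod_cast Nat.le_of_add_le_add_left h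
  have htM := Nat.floor_le (mul_nonneg ht hM'.le)
  have htM' := Nat.lt_floor_add_one (t * M)
  have huM := Nat.floor_le (mul_nonneg hu hM'.le)
  have huM' := Nat.lt_floor_add_one (u * M)
  rw [le_div_iff₀ hM', ← Nat.abs_cast, ← abs_mul, sub_mul, abs_le]
  simp only [cellIndex, Nat.cast_add]
  constructor <;> linarith

end Cells

section Potentials

variable {P ι : Type*}

/-- The growth and regularity of the potentials `φ l i n = log (w_1 ⋯ w_n)` for parameters `l` in
a compact set `K`: they grow at least like `n ^ α`, with Lipschitz constants of the same order. -/
structure PotentialBounds [PseudoMetricSpace P] (φ : P → ι → ℕ → ℝ) (α : ℝ) (K : Set P)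
    (D₁ D₂ D₃ : ℝ) (N : ℕ) : Prop where
  isCompact : IsCompact K
  continuousOn : ∀ i n, ContinuousOn (fun l => φ l i n) K
  lipschitz_pos : 0 < D₁
  lipschitz : ∀ l ∈ K, ∀ ν ∈ K, ∀ i n, N ≤ n → |φ l i n - φ ν i n| ≤ D₁ * (n : ℝ) ^ α * dist l ν
  growth_pos : 0 < D₃
  growth : ∀ l ∈ K, ∀ i n, N ≤ n → D₂ + D₃ * (n : ℝ) ^ α ≤ φ l i n

/-- An assignment of the parameters in `S` to the cells `1, …, B`, the cell `k` standing for the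
block `s * k ≤ q < s * (k + 1)` of coordinates. The potentials of parameters sharing a cell are
`η`-close on the first `p` coordinates and on their block; if `ν` is in a later cell than `l`, then
on the block of `ν` the potential of `l` exceeds that of `ν` by at most `D * (gap) ^ α`. -/
structure IsCellSystem (φ : P → ι → ℕ → ℝ) (S : Set P) (cell : P → ℕ) (s p B : ℕ)
    (α D η : ℝ) : Prop where
  one_le : ∀ l ∈ S, 1 ≤ cell l
  le : ∀ l ∈ S, cell l ≤ B
  head : ∀ l ∈ S, ∀ ν ∈ S, cell l = cell ν → ∀ i j, j < p → |φ l i j - φ ν i j| ≤ η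
  block : ∀ l ∈ S, ∀ ν ∈ S, cell l = cell ν → ∀ i q, q / s = cell ν → |φ l i q - φ ν i q| ≤ η
  later : ∀ l ∈ S, ∀ ν ∈ S, cell l < cell ν → ∀ i q, q / s = cell ν →
    φ l i q - φ ν i q ≤ D * ((s * (cell ν - cell l) : ℕ) : ℝ) ^ α

section Existence

variable [PseudoMetricSpace P] {φ : P → ι → ℕ → ℝ} {α β κ D₁ D₂ D₃ η : ℝ} {K S : Set P} {N : ℕ}
  {f : P → ℝ}

lemma PotentialBounds.exists_forall_dist_lt_abs_sub_le [Finite ι]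
    (hφ : PotentialBounds φ α K D₁ D₂ D₃ N) (p : ℕ) (hη : 0 < η) :
    ∃ δ > 0, ∀ l ∈ K, ∀ ν ∈ K, dist l ν < δ → ∀ i j, j < p → |φ l i j - φ ν i j| ≤ η := by
  have hcont : ContinuousOn (fun l (x : ι × Fin p) => φ l x.1 x.2) K :=
    continuousOn_pi.2 fun x => hφ.continuousOn x.1 x.2
  cases nonempty_fintype ι
  obtain ⟨δ, hδ, h⟩ :=
    Metric.uniformContinuousOn_iff.1 (hφ.isCompact.uniformContinuousOn_of_continuous hcont) η hη
  refine ⟨δ, hδ, fun l hl ν hν hlν i j hj => ?_⟩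
  have := (dist_le_pi_dist _ _ (i, ⟨j, hj⟩)).trans (h l hl ν hν hlν).le
  rwa [Real.dist_eq] at this

lemma PotentialBounds.abs_sub_le_on_block (hφ : PotentialBounds φ α K D₁ D₂ D₃ N) (hα : 0 < α)
    (hSK : S ⊆ K) (hf : ∀ l ∈ S, f l ∈ Set.Icc 0 1)
    (hfβ : ∀ l ∈ S, ∀ ν ∈ S, dist l ν ≤ κ * |f l - f ν| ^ β) {s M : ℕ} (hNs : N ≤ s)
    (hM : 0 < M) {l ν : P} (hl : l ∈ S) (hν : ν ∈ S) (i : ι) {q : ℕ}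
    (hq : q / s = cellIndex M (f ν)) :
    |φ l i q - φ ν i q| ≤ D₁ * (3 * s * M) ^ α * (κ * |f l - f ν| ^ β) := by
  have hq_pos : 0 < q / s := hq ▸ hM.trans_le (le_cellIndex M (f ν))
  have hs : 0 < s := Nat.pos_of_ne_zero fun h => by simp [h] at hq_pos
  have hNq : N ≤ q := hNs.trans (Nat.div_pos_iff.1 hq_pos).2
  have hqle : (q : ℝ) ≤ 3 * s * M := by
    have hlt : q < s * (2 * M + 1) :=
      (Nat.lt_mul_div_succ q hs).trans_le
        (Nat.mul_le_mul_left s (by rw [hq]; exact Nat.succ_le_succ (cellIndex_le M (hf ν hν).2)))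
    have : q ≤ 3 * s * M := hlt.le.trans (by nlinarith)
    exact_mod_cast this
  have := hφ.lipschitz_pos
  calc |φ l i q - φ ν i q| ≤ D₁ * (q : ℝ) ^ α * dist l ν :=
        hφ.lipschitz l (hSK hl) ν (hSK hν) i q hNq
    _ ≤ D₁ * (3 * s * M) ^ α * (κ * |f l - f ν| ^ β) := by
        gcongr
        exact hfβ l hl ν hν

lemma PotentialBounds.sub_le_on_later_block (hφ : PotentialBounds φ α K D₁ D₂ D₃ N)
    (hα : 0 < α) (hαβ : α < β) (hκ : 0 < κ) (hκD : D₁ * κ * 6 ^ α ≤ D₃ / 2)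
    (hSK : S ⊆ K) (hf : ∀ l ∈ S, f l ∈ Set.Icc 0 1)
    (hfβ : ∀ l ∈ S, ∀ ν ∈ S, dist l ν ≤ κ * |f l - f ν| ^ β) {s M : ℕ} (hNs : N ≤ s)
    (hM : 0 < M) {l ν : P} (hl : l ∈ S) (hν : ν ∈ S)
    (hlt : cellIndex M (f l) < cellIndex M (f ν)) (i : ι) {q : ℕ}
    (hq : q / s = cellIndex M (f ν)) :
    φ l i q - φ ν i q ≤
      D₃ / 2 * ((s * (cellIndex M (f ν) - cellIndex M (f l)) : ℕ) : ℝ) ^ α := by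
  obtain ⟨hl0, hl1⟩ := hf l hl
  obtain ⟨hν0, hν1⟩ := hf ν hν
  have hgap : (1 : ℝ) ≤ (cellIndex M (f ν) - cellIndex M (f l) : ℕ) := by
    exact_mod_cast Nat.sub_pos_of_lt hlt
  have hfle : |f l - f ν| ≤ 2 * (cellIndex M (f ν) - cellIndex M (f l) : ℕ) / M := by
    refine (abs_sub_le_of_cellIndex_le hM hl0 hν0 hlt.le).trans ?_
    rw [← Nat.cast_sub hlt.le]
    gcongr
    linarith
  set k := cellIndex M (f ν) - cellIndex M (f l)
  have hD₁ := hφ.lipschitz_pos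
  calc φ l i q - φ ν i q ≤ D₁ * (3 * s * M) ^ α * (κ * |f l - f ν| ^ β) :=
        (le_abs_self _).trans (hφ.abs_sub_le_on_block hα hSK hf hfβ hNs hM hl hν i hq)
    _ ≤ D₁ * (3 * s * M) ^ α * (κ * |f l - f ν| ^ α) := by
        gcongr ?_ * (κ * ?_)
        exact Real.rpow_le_rpow_of_exponent_ge_of_imp (abs_nonneg _)
          (abs_le.2 ⟨by linarith, by linarith⟩) hαβ.le
          fun _ h => absurd h (hα.trans hαβ).ne'
    _ ≤ D₁ * (3 * s * M) ^ α * (κ * (2 * k / M) ^ α) := by gcongr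
    _ = D₁ * κ * 6 ^ α * ((s * k : ℕ) : ℝ) ^ α := by
        rw [mul_mul_mul_comm, ← Real.mul_rpow (by positivity) (by positivity), mul_assoc (D₁ * κ),
          ← Real.mul_rpow (by positivity) (by positivity)]
        congr 2
        push_cast
        field_simp
        ring
    _ ≤ D₃ / 2 * ((s * k : ℕ) : ℝ) ^ α := by gcongr

lemma tendsto_rpow_mul_inv_rpow (hαβ : α < β) {c : ℝ} (hc : 0 ≤ c) :
    Filter.Tendsto (fun M : ℕ => (c * M) ^ α * ((1 : ℝ) / M) ^ β) Filter.atTop (nhds 0) := by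
  have hlim : Filter.Tendsto (fun M : ℕ => c ^ α * (M : ℝ) ^ (-(β - α)))
      Filter.atTop (nhds 0) := by
    simpa only [mul_zero, Function.comp_def] using
      ((tendsto_rpow_neg_atTop (sub_pos.2 hαβ)).comp tendsto_natCast_atTop_atTop).const_mul (c ^ α)
  refine hlim.congr' ?_
  filter_upwards [Filter.eventually_gt_atTop 0] with M hM
  have hM' : (0 : ℝ) < M := by exact_mod_cast hM
  rw [Real.mul_rpow hc hM'.le, one_div, Real.inv_rpow hM'.le, ← Real.rpow_neg hM'.le, mul_assoc,
    ← Real.rpow_add hM', neg_sub, sub_eq_add_neg]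

lemma PotentialBounds.exists_isCellSystem [Finite ι] (hφ : PotentialBounds φ α K D₁ D₂ D₃ N)
    (hα : 0 < α) (hαβ : α < β) (hκ : 0 < κ) (hκD : D₁ * κ * 6 ^ α ≤ D₃ / 2)
    (hSK : S ⊆ K) (hf : ∀ l ∈ S, f l ∈ Set.Icc 0 1)
    (hfβ : ∀ l ∈ S, ∀ ν ∈ S, dist l ν ≤ κ * |f l - f ν| ^ β) {s : ℕ} (hNs : N ≤ s) (p : ℕ)
    (hη : 0 < η) :
    ∃ (cell : P → ℕ) (B : ℕ), IsCellSystem φ S cell s p B α (D₃ / 2) η := by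
  have hβ : 0 < β := hα.trans hαβ
  have hD₁ := hφ.lipschitz_pos
  obtain ⟨δ, hδ, hhead⟩ := hφ.exists_forall_dist_lt_abs_sub_le p hη
  have hdist : Filter.Tendsto (fun M : ℕ => κ * ((1 : ℝ) / M) ^ β) Filter.atTop (nhds 0) := by
    simpa [hβ.ne'] using
      (tendsto_one_div_atTop_nhds_zero_nat.rpow_const (Or.inr hβ.le)).const_mul κ
  have hosc : Filter.Tendsto
      (fun M : ℕ => D₁ * κ * ((3 * s * M) ^ α * ((1 : ℝ) / M) ^ β)) Filter.atTop (nhds 0) := by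
    simpa only [mul_zero] using
      (tendsto_rpow_mul_inv_rpow hαβ (c := 3 * s) (by positivity)).const_mul (D₁ * κ)
  obtain ⟨M, hMδ, hMη, hM⟩ := ((hdist.eventually_lt_const hδ).and
    ((hosc.eventually_le_const hη).and (Filter.eventually_gt_atTop 0))).exists
  have hsame : ∀ l ∈ S, ∀ ν ∈ S, cellIndex M (f l) = cellIndex M (f ν) →
      |f l - f ν| ≤ 1 / M := fun l hl ν hν h => by
    simpa only [h, sub_self, zero_add] using
      abs_sub_le_of_cellIndex_le hM (hf l hl).1 (hf ν hν).1 h.le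
  refine ⟨fun l => cellIndex M (f l), 2 * M, fun l _ => hM.trans_le (le_cellIndex M _),
    fun l hl => cellIndex_le M (hf l hl).2, fun l hl ν hν h => ?_, fun l hl ν hν h i q hq => ?_,
    fun l hl ν hν h i q hq =>
      hφ.sub_le_on_later_block hα hαβ hκ hκD hSK hf hfβ hNs hM hl hν h i hq⟩
  · refine hhead l (hSK hl) ν (hSK hν) (((hfβ l hl ν hν).trans ?_).trans_lt hMδ)
    gcongr
    exact hsame l hl ν hν h
  · calc |φ l i q - φ ν i q| ≤ D₁ * (3 * s * M) ^ α * (κ * |f l - f ν| ^ β) :=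
          hφ.abs_sub_le_on_block hα hSK hf hfβ hNs hM hl hν i hq
      _ ≤ D₁ * (3 * s * M) ^ α * (κ * (1 / M) ^ β) := by
          gcongr
          exact hsame l hl ν hν h
      _ = D₁ * κ * ((3 * s * M) ^ α * (1 / M) ^ β) := by ring
      _ ≤ η := hMη

end Existence

end Potentials

section BlockVector

variable {P ι : Type*}

open Classical in
/-- On the block `s * k ≤ q < s * (k + 1)` of a cell `k` occupied by a parameter of `S`, the
preimage of `y` under the `s * k`-th power of the shift of one representative of that cell; zero
on the other blocks. -/
def blockVector (φ : P → ι → ℕ → ℝ) (S : Set P) (cell : P → ℕ) (s : ℕ) (y : ι → c0C)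
    (i : ι) (q : ℕ) : ℂ :=
  if h : ∃ ν ∈ S, cell ν = q / s then
    Real.exp (φ h.choose i (q % s) - φ h.choose i q) • y i (q % s)
  else 0

variable {φ : P → ι → ℕ → ℝ} {S : Set P} {cell : P → ℕ} {s p B : ℕ} {y : ι → c0C}
  {α D η ε : ℝ}

lemma blockVector_eq_zero {q : ℕ} (h : ∀ ν ∈ S, cell ν ≠ q / s) (i : ι) :
    blockVector φ S cell s y i q = 0 :=
  dif_neg fun ⟨ν, hν, hq⟩ => h ν hν hq

lemma exists_blockVector_eq {q : ℕ} (h : ∃ ν ∈ S, cell ν = q / s) :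
    ∃ ν ∈ S, cell ν = q / s ∧ ∀ i,
      blockVector φ S cell s y i q = Real.exp (φ ν i (q % s) - φ ν i q) • y i (q % s) :=
  ⟨h.choose, h.choose_spec.1, h.choose_spec.2, fun _ => dif_pos h⟩

lemma exists_norm_blockVector_le {Y : ℝ}
    (hY : ∀ l ∈ S, ∀ i j, Real.exp (φ l i j) * ‖y i j‖ ≤ Y) (q : ℕ) :
    (∀ i, blockVector φ S cell s y i q = 0) ∨ ∃ ν ∈ S, cell ν = q / s ∧
      ∀ i, ‖blockVector φ S cell s y i q‖ ≤ Y * Real.exp (-φ ν i q) := by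
  by_cases h : ∃ ν ∈ S, cell ν = q / s
  · obtain ⟨ν, hν, hq, heq⟩ := exists_blockVector_eq (φ := φ) (y := y) h
    refine Or.inr ⟨ν, hν, hq, fun i => ?_⟩
    rw [heq, norm_smul, Real.norm_eq_abs, Real.abs_exp, sub_eq_add_neg, Real.exp_add,
      mul_right_comm]
    gcongr
    exact hY ν hν i _
  · exact Or.inl (blockVector_eq_zero fun ν hν hq => h ⟨ν, hν, hq⟩)

lemma IsCellSystem.blockVector_eq_zero (hc : IsCellSystem φ S cell s p B α D η) (hs : 0 < s) (i : ι)
    {q : ℕ} (hq : q < s ∨ s * (B + 1) ≤ q) : blockVector φ S cell s y i q = 0 := by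
  refine _root_.blockVector_eq_zero (fun ν hν h => ?_) i
  have h1 := hc.one_le ν hν
  have hB := hc.le ν hν
  rcases hq with hq | hq
  · rw [Nat.div_eq_of_lt hq] at h
    omega
  · have := (Nat.le_div_iff_mul_le hs).2 (mul_comm s (B + 1) ▸ hq)
    omega

lemma IsCellSystem.norm_exp_smul_blockVector_sub_le_of_lt [Fintype ι]
    (hc : IsCellSystem φ S cell s p B α D η) (hy : ∀ i j, p ≤ j → y i j = 0) (hε : 0 ≤ ε)
    (hη : ∀ t : ℝ, |t| ≤ 2 * η → |Real.exp t - 1| * ‖y‖ ≤ ε)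
    {l : P} (hl : l ∈ S) (i : ι) {j : ℕ} (hj : j < s) :
    ‖Real.exp (φ l i (j + s * cell l) - φ l i j) •
      blockVector φ S cell s y i (j + s * cell l) - y i j‖ ≤ ε := by
  set q := j + s * cell l
  have hdiv : q / s = cell l := by
    rw [Nat.add_mul_div_left _ _ (Nat.zero_lt_of_lt hj), Nat.div_eq_of_lt hj, zero_add]
  have hmod : q % s = j := by rw [Nat.add_mul_mod_self_left, Nat.mod_eq_of_lt hj]
  obtain ⟨ν, hν, hνq, heq⟩ := exists_blockVector_eq (φ := φ) (y := y) ⟨l, hl, hdiv.symm⟩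
  rw [heq, hmod, smul_smul, ← Real.exp_add]
  rcases lt_or_ge j p with hjp | hjp
  · have hsame : cell l = cell ν := hdiv.symm.trans hνq.symm
    have ht : |φ l i q - φ l i j + (φ ν i j - φ ν i q)| ≤ 2 * η :=
      calc |φ l i q - φ l i j + (φ ν i j - φ ν i q)|
          = |(φ l i q - φ ν i q) - (φ l i j - φ ν i j)| := by congr 1; ring
        _ ≤ |φ l i q - φ ν i q| + |φ l i j - φ ν i j| := abs_sub _ _
        _ ≤ η + η := add_le_add (hc.block l hl ν hν hsame i q hνq.symm)
            (hc.head l hl ν hν hsame i j hjp)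
        _ = 2 * η := (two_mul η).symm
    rw [← one_smul ℝ (y i j), smul_smul, mul_one, ← sub_smul, norm_smul, Real.norm_eq_abs]
    exact (mul_le_mul_of_nonneg_left (norm_apply_le_norm y i j) (abs_nonneg _)).trans (hη _ ht)
  · simpa only [hy i j hjp, smul_zero, sub_zero, norm_zero] using hε

variable [PseudoMetricSpace P] {D₁ D₂ D₃ Y : ℝ} {K : Set P} {N : ℕ}

lemma PotentialBounds.norm_blockVector_le (hφ : PotentialBounds φ α K D₁ D₂ D₃ N) (hSK : S ⊆ K)
    (hc : IsCellSystem φ S cell s p B α (D₃ / 2) η) (hNs : N ≤ s) (hs : 0 < s) (hε : 0 ≤ ε)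
    (hY0 : 0 ≤ Y) (hY : ∀ l ∈ S, ∀ i j, Real.exp (φ l i j) * ‖y i j‖ ≤ Y)
    (hsε : ∀ q : ℕ, s ≤ q → Y * Real.exp (-(D₂ + D₃ / 2 * (q : ℝ) ^ α)) ≤ ε) (i : ι) (q : ℕ) :
    ‖blockVector φ S cell s y i q‖ ≤ ε := by
  rcases lt_or_ge q s with hqs | hqs
  · rwa [hc.blockVector_eq_zero hs i (Or.inl hqs), norm_zero]
  rcases exists_norm_blockVector_le (cell := cell) (s := s) hY q with h | ⟨ν, hν, -, hle⟩
  · rwa [h i, norm_zero]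
  have hpow : 0 ≤ D₃ / 2 * (q : ℝ) ^ α := by
    have := hφ.growth_pos
    positivity
  have hgrowth := hφ.growth ν (hSK hν) i q (hNs.trans hqs)
  calc ‖blockVector φ S cell s y i q‖ ≤ Y * Real.exp (-φ ν i q) := hle i
    _ ≤ Y * Real.exp (-(D₂ + D₃ / 2 * (q : ℝ) ^ α)) := by
        gcongr
        linarith
    _ ≤ ε := hsε q hqs

lemma PotentialBounds.norm_exp_smul_blockVector_le (hφ : PotentialBounds φ α K D₁ D₂ D₃ N)
    (hα : 0 < α) (hSK : S ⊆ K) (hc : IsCellSystem φ S cell s p B α (D₃ / 2) η) (hNs : N ≤ s)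
    (hs : 0 < s) (hε : 0 ≤ ε) (hY0 : 0 ≤ Y)
    (hY : ∀ l ∈ S, ∀ i j, Real.exp (φ l i j) * ‖y i j‖ ≤ Y)
    (hsε : ∀ q : ℕ, s ≤ q → Y * Real.exp (-(D₂ + D₃ / 2 * (q : ℝ) ^ α)) ≤ ε)
    {l : P} (hl : l ∈ S) (i : ι) {j : ℕ} (hj : s ≤ j) :
    ‖Real.exp (φ l i (j + s * cell l) - φ l i j) •
      blockVector φ S cell s y i (j + s * cell l)‖ ≤ ε := by
  set q := j + s * cell l
  have hdiv : q / s = j / s + cell l := Nat.add_mul_div_left _ _ hs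
  rcases exists_norm_blockVector_le (cell := cell) (s := s) hY q with h | ⟨ν, hν, hνq, hle⟩
  · rwa [h i, smul_zero, norm_zero]
  have hlt : cell l < cell ν := by
    have := Nat.div_pos hj hs
    omega
  have hgap : s * (cell ν - cell l) ≤ j := by
    rw [hνq, hdiv, Nat.add_sub_cancel]
    exact Nat.mul_div_le j s
  have hD₃ := hφ.growth_pos
  have hlater : φ l i q - φ ν i q ≤ D₃ / 2 * (j : ℝ) ^ α :=
    (hc.later l hl ν hν hlt i q hνq.symm).trans (by gcongr)
  have hgrowth := hφ.growth l (hSK hl) i j (hNs.trans hj)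
  calc ‖Real.exp (φ l i q - φ l i j) • blockVector φ S cell s y i q‖
      ≤ Real.exp (φ l i q - φ l i j) * (Y * Real.exp (-φ ν i q)) := by
        rw [norm_smul, Real.norm_eq_abs, Real.abs_exp]
        gcongr
        exact hle i
    _ = Y * Real.exp ((φ l i q - φ ν i q) - φ l i j) := by
        rw [mul_left_comm, ← Real.exp_add]
        congr 2
        ring
    _ ≤ Y * Real.exp (-(D₂ + D₃ / 2 * (j : ℝ) ^ α)) := by
        gcongr
        linarith
    _ ≤ ε := hsε j hj

lemma PotentialBounds.exists_exp_mul_norm_le [Finite ι] (hφ : PotentialBounds φ α K D₁ D₂ D₃ N)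
    (hy : ∀ i j, p ≤ j → y i j = 0) :
    ∃ Y, 0 ≤ Y ∧ ∀ l ∈ K, ∀ i j, Real.exp (φ l i j) * ‖y i j‖ ≤ Y := by
  cases nonempty_fintype ι
  have hcont : ContinuousOn (fun l (x : ι × Fin p) => Real.exp (φ l x.1 x.2)) K :=
    continuousOn_pi.2 fun x => (hφ.continuousOn x.1 x.2).rexp
  obtain ⟨C, hC⟩ := hφ.isCompact.exists_bound_of_continuousOn hcont
  refine ⟨|C| * ‖y‖, by positivity, fun l hl i j => ?_⟩
  rcases lt_or_ge j p with hj | hj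
  · have hexp : Real.exp (φ l i j) ≤ |C| :=
      (le_abs_self _).trans <|
        (norm_le_pi_norm (fun x : ι × Fin p => Real.exp (φ l x.1 x.2)) (i, ⟨j, hj⟩)).trans <|
          (hC l hl).trans (le_abs_self C)
    gcongr
    exact norm_apply_le_norm y i j
  · rw [hy i j hj, norm_zero, mul_zero]
    positivity

lemma exists_forall_abs_exp_sub_one_mul_le (Y : ℝ) (hε : 0 < ε) :
    ∃ η > 0, ∀ t : ℝ, |t| ≤ 2 * η → |Real.exp t - 1| * Y ≤ ε := by
  have hcont : Filter.Tendsto (fun t => |Real.exp t - 1| * Y) (nhds 0) (nhds 0) := by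
    have : Continuous fun t => |Real.exp t - 1| * Y := by fun_prop
    simpa using this.tendsto 0
  obtain ⟨δ, hδ, h⟩ := Metric.eventually_nhds_iff.1 (hcont.eventually_le_const hε)
  refine ⟨δ / 4, by positivity, fun t ht => h ?_⟩
  rw [dist_zero_right, Real.norm_eq_abs]
  linarith

lemma tendsto_mul_exp_neg_rpow (hα : 0 < α) (hD : 0 < D) (Y C : ℝ) :
    Filter.Tendsto (fun n : ℕ => Y * Real.exp (-(C + D * (n : ℝ) ^ α))) Filter.atTop (nhds 0) := by
  have hlim : Filter.Tendsto (fun n : ℕ => C + D * (n : ℝ) ^ α) Filter.atTop Filter.atTop :=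
    Filter.tendsto_atTop_add_const_left _ _
      (((tendsto_rpow_atTop hα).comp tendsto_natCast_atTop_atTop).const_mul_atTop hD)
  simpa only [mul_zero, Function.comp_def] using
    (Real.tendsto_exp_neg_atTop_nhds_zero.comp hlim).const_mul Y

lemma PotentialBounds.exists_block [Finite ι] (hφ : PotentialBounds φ α K D₁ D₂ D₃ N)
    (hα : 0 < α) {β κ : ℝ} (hαβ : α < β) (hκ : 0 < κ) (hκD : D₁ * κ * 6 ^ α ≤ D₃ / 2)
    (hSK : S ⊆ K) {f : P → ℝ} (hf : ∀ l ∈ S, f l ∈ Set.Icc 0 1)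
    (hfβ : ∀ l ∈ S, ∀ ν ∈ S, dist l ν ≤ κ * |f l - f ν| ^ β)
    (hy : ∀ i j, p ≤ j → y i j = 0) (hε : 0 < ε) (A : ℕ) :
    ∃ u : ι → c0C, (∀ i q, ‖u i q‖ ≤ ε) ∧ ∃ B, ∀ l ∈ S, ∃ n, A ≤ n ∧ n ≤ B ∧
      ∀ i j, ‖Real.exp (φ l i (j + n) - φ l i j) • u i (j + n) - y i j‖ ≤ ε := by
  cases nonempty_fintype ι
  obtain ⟨Y, hY0, hY⟩ := hφ.exists_exp_mul_norm_le hy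
  obtain ⟨η, hη, hexp⟩ := exists_forall_abs_exp_sub_one_mul_le ‖y‖ hε
  obtain ⟨s₀, hs₀⟩ := Filter.eventually_atTop.1
    ((tendsto_mul_exp_neg_rpow hα (half_pos hφ.growth_pos) Y D₂).eventually_le_const hε)
  obtain ⟨s, hs⟩ : ∃ s, max (max A N) (max s₀ (p + 1)) ≤ s := ⟨_, le_rfl⟩
  simp only [max_le_iff] at hs
  obtain ⟨⟨hAs, hNs⟩, hs₀s, hps⟩ := hs
  have hs_pos : 0 < s := by omega
  have hYS : ∀ l ∈ S, ∀ i j, Real.exp (φ l i j) * ‖y i j‖ ≤ Y := fun l hl => hY l (hSK hl)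
  have hsε : ∀ q : ℕ, s ≤ q → Y * Real.exp (-(D₂ + D₃ / 2 * (q : ℝ) ^ α)) ≤ ε :=
    fun q hq => hs₀ q (hs₀s.trans hq)
  obtain ⟨cell, B, hc⟩ := hφ.exists_isCellSystem hα hαβ hκ hκD hSK hf hfβ hNs p hη
  refine ⟨fun i => nullSeq (blockVector φ S cell s y i)
    (tendsto_zero_of_forall_ge_eq_zero fun q hq => hc.blockVector_eq_zero hs_pos i (Or.inr hq)),
    hφ.norm_blockVector_le hSK hc hNs hs_pos hε.le hY0 hYS hsε, s * B, fun l hl =>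
    ⟨s * cell l, hAs.trans (Nat.le_mul_of_pos_right s (hc.one_le l hl)),
      Nat.mul_le_mul_left s (hc.le l hl), fun i j => ?_⟩⟩
  rw [nullSeq_apply]
  rcases lt_or_ge j s with hj | hj
  · exact hc.norm_exp_smul_blockVector_sub_le_of_lt hy hε.le hexp hl i hj
  · rw [hy i j (by omega), sub_zero]
    exact hφ.norm_exp_smul_blockVector_le hα hSK hc hNs hs_pos hε.le hY0 hYS hsε hl i hj

end BlockVector

section Baire

lemma mapClusterPt_atTop_of_forall_exists_dist_lt {X : Type*} [PseudoMetricSpace X] {u : ℕ → X}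
    {y : X} (h : ∀ k : ℕ, ∃ n ≥ k, dist (u n) y < 1 / (k + 1)) :
    MapClusterPt y Filter.atTop u := by
  refine (Metric.nhds_basis_ball.mapClusterPt_iff_frequently).2 fun ε hε =>
    Filter.frequently_atTop.2 fun a => ?_
  obtain ⟨k, hk⟩ := exists_nat_one_div_lt hε
  obtain ⟨n, hn, hdist⟩ := h (max a k)
  refine ⟨n, (le_max_left a k).trans hn, hdist.trans (lt_of_le_of_lt ?_ hk)⟩
  gcongr
  exact le_max_right a k

section Operators

variable {𝕜 X P : Type*} [NontriviallyNormedField 𝕜] [SeminormedAddCommGroup X] [NormedSpace 𝕜 X]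
  {T : P → X →L[𝕜] X} {S : Set P} {R : ℝ}

lemma norm_pow_le_of_norm_le {L : X →L[𝕜] X} (hL : ‖L‖ ≤ R) {n B : ℕ} (hn : n ≤ B) :
    ‖L ^ n‖ ≤ max 1 R ^ B :=
  calc ‖L ^ n‖ ≤ max 1 R ^ n := by
        induction n with
        | zero =>
          rw [pow_zero, pow_zero]
          exact ContinuousLinearMap.norm_id_le
        | succ n ih =>
          rw [pow_succ, pow_succ]
          refine (norm_mul_le _ _).trans ?_
          gcongr
          · exact ih (by omega)
          · exact hL.trans (le_max_right 1 R)
    _ ≤ max 1 R ^ B := pow_le_pow_right₀ (le_max_left 1 R) hn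

lemma eventually_nhds_forall_exists_dist_lt (hR : ∀ l ∈ S, ‖T l‖ ≤ R) {F : X → X}
    (hF : Continuous F) {x y : X} {ε : ℝ} (hε : 0 < ε) {A B : ℕ}
    (h : ∀ l ∈ S, ∃ n, A ≤ n ∧ n ≤ B ∧ dist ((T l ^ n) (F x)) y < ε) :
    ∀ᶠ z in nhds x, ∀ l ∈ S, ∃ n ≥ A, dist ((T l ^ n) (F z)) y < 2 * ε := by
  have hsmall : ∀ᶠ z in nhds x, max 1 R ^ B * dist (F z) (F x) < ε := by
    have hlim : Filter.Tendsto (fun z => max 1 R ^ B * dist (F z) (F x)) (nhds x) (nhds 0) := by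
      have : Continuous fun z => max 1 R ^ B * dist (F z) (F x) := by fun_prop
      simpa using this.tendsto x
    exact hlim.eventually_lt_const hε
  filter_upwards [hsmall] with z hz l hl
  obtain ⟨n, hAn, hnB, hn⟩ := h l hl
  refine ⟨n, hAn, ?_⟩
  calc dist ((T l ^ n) (F z)) y
      ≤ dist ((T l ^ n) (F z)) ((T l ^ n) (F x)) + dist ((T l ^ n) (F x)) y := dist_triangle _ _ _
    _ ≤ max 1 R ^ B * dist (F z) (F x) + dist ((T l ^ n) (F x)) y := by
        gcongr
        rw [dist_eq_norm, dist_eq_norm, ← map_sub]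
        exact (T l ^ n).le_of_opNorm_le (norm_pow_le_of_norm_le (hR l hl) hnB) _
    _ < 2 * ε := by linarith

/-- The Baire category argument for an uncountable, uniformly bounded family of operators: the
bound `B` on the times of approach, uniform over the family, makes the condition open. -/
lemma eventually_residual_forall_mapClusterPt (hR : ∀ l ∈ S, ‖T l‖ ≤ R) {F : X → X}
    (hF : Continuous F) {y : X}
    (h : ∀ x₀, ∀ ε > 0, ∀ A : ℕ, ∃ x, dist x x₀ < ε ∧ ∃ B, ∀ l ∈ S, ∃ n, A ≤ n ∧ n ≤ B ∧
      dist ((T l ^ n) (F x)) y < ε) :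
    ∀ᶠ x in residual X, ∀ l ∈ S, MapClusterPt y Filter.atTop fun n => (T l ^ n) (F x) := by
  let V : ℕ → Set X := fun k =>
    {x | ∀ l ∈ S, ∃ n ≥ k, dist ((T l ^ n) (F x)) y < 1 / (k + 1)}
  have hV : ∀ k, interior (V k) ∈ residual X := by
    refine fun k => residual_of_dense_open isOpen_interior (Metric.dense_iff.2 fun x₀ r hr => ?_)
    obtain ⟨x, hx, B, hB⟩ := h x₀ (min r (1 / (2 * (k + 1)))) (by positivity) k
    refine ⟨x, hx.trans_le (min_le_left _ _), mem_interior_iff_mem_nhds.2 ?_⟩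
    filter_upwards [eventually_nhds_forall_exists_dist_lt hR hF (by positivity) hB]
      with z hz l hl
    obtain ⟨n, hn, hdist⟩ := hz l hl
    refine ⟨n, hn, hdist.trans_le ?_⟩
    calc 2 * min r (1 / (2 * ((k : ℝ) + 1))) ≤ 2 * (1 / (2 * (k + 1))) := by
          gcongr
          exact min_le_right _ _
      _ = 1 / (k + 1) := by field_simp
  filter_upwards [countable_iInter_mem.2 hV] with x hx l hl
  exact mapClusterPt_atTop_of_forall_exists_dist_lt fun k =>
    interior_subset (Set.mem_iInter.1 hx k) l hl

end Operators

variable {P ι : Type*}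

lemma exists_coordPow_eq (m : ℕ) (u : ι → c0C) : ∃ v, coordPow m v = u := by
  choose v hv using fun i n => IsAlgClosed.exists_pow_nat_eq (u i n) m.succ_pos
  have hnorm : ∀ i, Filter.Tendsto (v i) Filter.atTop (nhds 0) := fun i => by
    refine Metric.tendsto_nhds.2 fun ε hε => ?_
    filter_upwards [(tendsto_zero_iff_norm_tendsto_zero.1
      (tendsto_apply_atTop (u i))).eventually_lt_const (pow_pos hε (m + 1))] with n hn
    rw [← hv, norm_pow] at hn
    rw [dist_zero_right]
    exact lt_of_pow_lt_pow_left₀ _ hε.le hn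
  exact ⟨fun i => nullSeq (v i) (hnorm i), by ext i n; simp [hv]⟩

variable [PseudoMetricSpace P] [Fintype ι] {φ : P → ι → ℕ → ℝ}
  {α D₁ D₂ D₃ : ℝ} {K S : Set P} {N : ℕ}

lemma PotentialBounds.exists_dist_pow_coordPow_lt (hφ : PotentialBounds φ α K D₁ D₂ D₃ N)
    (hα : 0 < α) {β κ : ℝ} (hαβ : α < β) (hκ : 0 < κ) (hκD : D₁ * κ * 6 ^ α ≤ D₃ / 2)
    (hSK : S ⊆ K) {f : P → ℝ} (hf : ∀ l ∈ S, f l ∈ Set.Icc 0 1)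
    (hfβ : ∀ l ∈ S, ∀ ν ∈ S, dist l ν ≤ κ * |f l - f ν| ^ β)
    {T : P → (ι → c0C) →L[ℂ] (ι → c0C)} (hT : ∀ l ∈ S, IsPotentialShift (φ l) (T l))
    (m : ℕ) (x₀ y : ι → c0C) {ε : ℝ} (hε : 0 < ε) (A : ℕ) :
    ∃ x, dist x x₀ < ε ∧ ∃ B, ∀ l ∈ S, ∃ n, A ≤ n ∧ n ≤ B ∧
      dist ((T l ^ n) (coordPow m x)) y < ε := by
  have hε4 : 0 < ε / 4 := by positivity
  obtain ⟨y', p, hy', hyy'⟩ := exists_finitelySupported_dist_le y hε4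
  obtain ⟨a, ha⟩ := exists_forall_norm_apply_le x₀ hε4
  obtain ⟨u, hu, B, hB⟩ := hφ.exists_block hα hαβ hκ hκD hSK hf hfβ hy'
    (lt_min hε4 (pow_pos hε4 (m + 1))) (max A a)
  obtain ⟨v, rfl⟩ := exists_coordPow_eq m u
  have hv : ∀ i q, ‖v i q‖ ≤ ε / 4 := fun i q => by
    have := (hu i q).trans (min_le_right _ _)
    rw [coordPow_apply, norm_pow] at this
    exact (pow_le_pow_iff_left₀ (norm_nonneg _) hε4.le m.succ_ne_zero).1 this
  refine ⟨splice x₀ v a, ?_, B, fun l hl => ?_⟩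
  · exact (dist_splice_le hε4.le hε4.le ha fun i q _ => hv i q).trans_lt (by linarith)
  obtain ⟨n, hAn, hnB, hn⟩ := hB l hl
  refine ⟨n, (le_max_left A a).trans hAn, hnB, ?_⟩
  have hdist : dist ((T l ^ n) (coordPow m (splice x₀ v a))) y' ≤ ε / 4 := by
    refine dist_le_of_forall_apply hε4.le fun i j => ?_
    rw [(hT l hl).pow_apply, coordPow_apply,
      splice_apply_of_le (((le_max_right A a).trans hAn).trans (Nat.le_add_left n j)),
      ← coordPow_apply]
    exact (hn i j).trans (min_le_left _ _)
  calc dist ((T l ^ n) (coordPow m (splice x₀ v a))) y ≤ ε / 4 + ε / 4 :=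
        (dist_triangle _ y' _).trans (add_le_add hdist hyy')
    _ < ε := by linarith

end Baire

section Generic

variable {ι : Type*} [Finite ι] {d : ℕ} {φ : (Fin d → ℝ) → ι → ℕ → ℝ} {α : ℝ}
  {T : (Fin d → ℝ) → (ι → c0C) →L[ℂ] (ι → c0C)}

lemma PotentialBounds.eventually_residual_forall_mapClusterPt {K : Set (Fin d → ℝ)}
    {D₁ D₂ D₃ : ℝ} {N : ℕ} (hφ : PotentialBounds φ α K D₁ D₂ D₃ N) (hα0 : 0 < α)
    (hα1 : α < 1 / d) (hT : ∀ l ∈ K, IsPotentialShift (φ l) (T l)) :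
    ∀ᶠ x in residual (ι → c0C), ∀ l ∈ K, ∀ m z,
      MapClusterPt z Filter.atTop fun n => (T l ^ n) (coordPow m x) := by
  cases nonempty_fintype ι
  have hD₁ := hφ.lipschitz_pos
  have hD₃ := hφ.growth_pos
  obtain ⟨β, hαβ, hβ⟩ := exists_between hα1
  obtain ⟨κ, hκ, hκD⟩ : ∃ κ > 0, D₁ * κ * 6 ^ α ≤ D₃ / 2 :=
    ⟨D₃ / 2 / (D₁ * 6 ^ α), by positivity, by field_simp; rfl⟩
  obtain ⟨cube, f, hf, hfβ⟩ := exists_holder_coordinate (hα0.trans hαβ) hβ hκ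
  let S : (Fin d → ℤ) → ℕ → Set (Fin d → ℝ) := fun k R => {l ∈ K | cube l = k ∧ ‖T l‖ ≤ R}
  have hS : ∀ᶠ x in residual (ι → c0C), ∀ k R m r, ∀ l ∈ S k R,
      MapClusterPt (TopologicalSpace.denseSeq (ι → c0C) r) Filter.atTop
        fun n => (T l ^ n) (coordPow m x) := by
    simp only [eventually_countable_forall]
    exact fun k R m r => _root_.eventually_residual_forall_mapClusterPt (fun l hl => hl.2.2)
      (continuous_coordPow m) fun x₀ ε hε A =>
        hφ.exists_dist_pow_coordPow_lt hα0 hαβ hκ hκD (fun l hl => hl.1) (fun l _ => hf l)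
          (fun l hl ν hν => hfβ l ν (hl.2.1.trans hν.2.1.symm)) (fun l hl => hT l hl.1)
          m x₀ _ hε A
  filter_upwards [hS] with x hx l hl m
  obtain ⟨R, hR⟩ := exists_nat_ge ‖T l‖
  have hclosed : IsClosed {z | MapClusterPt z Filter.atTop fun n => (T l ^ n) (coordPow m x)} :=
    isClosed_setOfPred_clusterPt
  have hrange : Set.range (TopologicalSpace.denseSeq (ι → c0C)) ⊆
      {z | MapClusterPt z Filter.atTop fun n => (T l ^ n) (coordPow m x)} :=
    Set.range_subset_iff.2 fun r => hx (cube l) R m r l ⟨hl, rfl, hR⟩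
  exact fun z => hclosed.closure_subset_iff.2 hrange (TopologicalSpace.denseRange_denseSeq _ z)

end Generic

section Algebra

variable {ι : Type*}

lemma exists_eval_of_mem_adjoin {x a : ι → c0C} (ha : a ∈ NonUnitalAlgebra.adjoin ℂ {x}) :
    ∃ P : Polynomial ℂ, P.coeff 0 = 0 ∧ ∀ i n, a i n = P.eval (x i n) := by
  induction ha using NonUnitalAlgebra.adjoin_induction with
  | mem y hy =>
    obtain rfl := Set.mem_singleton_iff.1 hy
    exact ⟨Polynomial.X, Polynomial.coeff_X_zero, fun i n => Polynomial.eval_X.symm⟩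
  | zero => exact ⟨0, Polynomial.coeff_zero 0, fun i n => Polynomial.eval_zero.symm⟩
  | add y z _ _ hy hz =>
    obtain ⟨P, hP0, hP⟩ := hy
    obtain ⟨Q, hQ0, hQ⟩ := hz
    exact ⟨P + Q, by simp [hP0, hQ0], fun i n => by simp [← hP, ← hQ]⟩
  | mul y z _ _ hy hz =>
    obtain ⟨P, hP0, hP⟩ := hy
    obtain ⟨Q, -, hQ⟩ := hz
    exact ⟨P * Q, by simp [hP0], fun i n => by simp [← hP, ← hQ]⟩
  | smul c y _ hy =>
    obtain ⟨P, hP0, hP⟩ := hy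
    exact ⟨c • P, by simp [hP0], fun i n => by simp [← hP]⟩

lemma exists_eq_X_pow_succ_mul {R : Type*} [CommRing R] {P : Polynomial R} (hP : P ≠ 0)
    (h0 : P.coeff 0 = 0) :
    ∃ (m : ℕ) (Q : Polynomial R), P = Polynomial.X ^ (m + 1) * Q ∧ Q.eval 0 ≠ 0 := by
  obtain ⟨Q, hQ, hdvd⟩ := P.exists_eq_pow_rootMultiplicity_mul_and_not_dvd hP 0
  rw [Polynomial.coeff_zero_eq_eval_zero] at h0
  obtain ⟨m, hm⟩ := Nat.exists_eq_succ_of_ne_zero ((Polynomial.rootMultiplicity_pos hP).2 h0).ne'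
  rw [hm, Polynomial.C_0, sub_zero] at hQ
  exact ⟨m, Q, hQ, fun h => hdvd (Polynomial.dvd_iff_isRoot.2 h)⟩

lemma exists_eq_coordPow_mul_eval_of_mem_adjoin {x a : ι → c0C}
    (ha : a ∈ NonUnitalAlgebra.adjoin ℂ {x}) (ha0 : a ≠ 0) :
    ∃ (m : ℕ) (Q : Polynomial ℂ), Q.eval 0 ≠ 0 ∧
      ∀ i n, a i n = coordPow m x i n * Q.eval (x i n) := by
  obtain ⟨P, hP0, hP⟩ := exists_eval_of_mem_adjoin ha
  have hP_ne : P ≠ 0 := by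
    rintro rfl
    exact ha0 (funext fun i => DFunLike.ext _ _ fun n => by simpa using hP i n)
  obtain ⟨m, Q, rfl, hQ⟩ := exists_eq_X_pow_succ_mul hP_ne hP0
  exact ⟨m, Q, hQ, fun i n => by simp [hP]⟩

lemma exists_forall_norm_eval_sub_le [Finite ι] (x : ι → c0C) (Q : Polynomial ℂ) {ε : ℝ}
    (hε : 0 < ε) :
    ∃ a, ∀ i q, a ≤ q → ‖Q.eval (x i q) - Q.eval 0‖ ≤ ε := by
  have hlim : ∀ i, Filter.Tendsto (fun q => ‖Q.eval (x i q) - Q.eval 0‖) Filter.atTop (nhds 0) :=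
    fun i => tendsto_iff_norm_sub_tendsto_zero.1
      ((Q.continuous.tendsto 0).comp (tendsto_apply_atTop (x i)))
  obtain ⟨a, ha⟩ := Filter.eventually_atTop.1
    (Filter.eventually_all.2 fun i => (hlim i).eventually_le_const hε)
  exact ⟨a, fun i q hq => ha q hq i⟩

variable {φ : ι → ℕ → ℝ} {T : (ι → c0C) →L[ℂ] (ι → c0C)}

lemma IsPotentialShift.isLittleO_pow_sub_smul [Fintype ι] (hT : IsPotentialShift φ T)
    {x a b : ι → c0C} {Q : Polynomial ℂ} (hab : ∀ i n, a i n = b i n * Q.eval (x i n)) :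
    (fun n => (T ^ n) a - Q.eval 0 • (T ^ n) b) =o[Filter.atTop] fun n => (T ^ n) b := by
  refine Asymptotics.isLittleO_iff.2 fun ε hε => ?_
  obtain ⟨p, hp⟩ := exists_forall_norm_eval_sub_le x Q hε
  filter_upwards [Filter.eventually_ge_atTop p] with n hn
  rw [← dist_eq_norm]
  refine dist_le_of_forall_apply (by positivity) fun i j => ?_
  have hfactor : (T ^ n) a i j - (Q.eval 0 • (T ^ n) b) i j =
      (Q.eval (x i (j + n)) - Q.eval 0) * (T ^ n) b i j := by
    rw [Pi.smul_apply, ZeroAtInftyContinuousMap.smul_apply, hT.pow_apply, hT.pow_apply, hab,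
      smul_eq_mul, ← smul_mul_assoc]
    ring
  rw [hfactor, norm_mul]
  gcongr
  · exact hp i _ (hn.trans (Nat.le_add_left n j))
  · exact norm_apply_le_norm _ i j

lemma IsPotentialShift.mapClusterPt_smul_of_mul_eval [Finite ι] (hT : IsPotentialShift φ T)
    {x a b z : ι → c0C} {Q : Polynomial ℂ} (hab : ∀ i n, a i n = b i n * Q.eval (x i n))
    (hb : MapClusterPt z Filter.atTop fun n => (T ^ n) b) :
    MapClusterPt (Q.eval 0 • z) Filter.atTop fun n => (T ^ n) a := by
  cases nonempty_fintype ι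
  obtain ⟨U, hU, hlim⟩ := mapClusterPt_iff_ultrafilter.1 hb
  have hdiff : Filter.Tendsto (fun n => (T ^ n) a - Q.eval 0 • (T ^ n) b) U (nhds 0) :=
    (Asymptotics.isLittleO_one_iff ℝ).1
      (((hT.isLittleO_pow_sub_smul hab).mono hU).trans_isBigO (hlim.isBigO_one ℝ))
  refine mapClusterPt_iff_ultrafilter.2 ⟨U, hU, ?_⟩
  simpa using hdiff.add (hlim.const_smul (Q.eval 0))

lemma IsPotentialShift.dense_range_of_mem_adjoin [Finite ι] (hT : IsPotentialShift φ T)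
    {x a : ι → c0C} (hx : ∀ m z, MapClusterPt z Filter.atTop fun n => (T ^ n) (coordPow m x))
    (ha : a ∈ NonUnitalAlgebra.adjoin ℂ {x}) (ha0 : a ≠ 0) :
    Dense (Set.range fun n : ℕ => (T ^ (n + 1)) a) := by
  obtain ⟨m, Q, hQ, haQ⟩ := exists_eq_coordPow_mul_eval_of_mem_adjoin ha ha0
  intro z
  have hz := hT.mapClusterPt_smul_of_mul_eval haQ (hx m ((Q.eval 0)⁻¹ • z))
  rw [smul_inv_smul₀ hQ] at hz
  refine mem_closure_iff_nhds.2 fun V hV => ?_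
  obtain ⟨n, hn, hnV⟩ := Filter.frequently_atTop.1 (hz.frequently hV) 1
  exact ⟨(T ^ n) a, hnV, n - 1, by simp only [Nat.sub_add_cancel hn]⟩

end Algebra

section Existence

variable {ι : Type*} [Finite ι] {d : ℕ} {φ : (Fin d → ℝ) → ι → ℕ → ℝ} {α : ℝ}
  {T : (Fin d → ℝ) → (ι → c0C) →L[ℂ] (ι → c0C)} {Λ : Set (Fin d → ℝ)}

theorem exists_ne_zero_forall_mem_adjoin_dense_range [Nonempty ι] (hα0 : 0 < α) (hα1 : α < 1 / d)
    (hΛ : IsSigmaCompact Λ)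
    (hφ : ∀ K ⊆ Λ, IsCompact K → ∃ D₁ D₂ D₃ N, PotentialBounds φ α K D₁ D₂ D₃ N)
    (hT : ∀ l ∈ Λ, IsPotentialShift (φ l) (T l)) :
    ∃ x : ι → c0C, x ≠ 0 ∧ ∀ a ∈ NonUnitalAlgebra.adjoin ℂ {x}, a ≠ 0 → ∀ l ∈ Λ,
      Dense (Set.range fun n : ℕ => ((T l) ^ (n + 1)) a) := by
  obtain ⟨K, hK, rfl⟩ := hΛ
  have hcluster : ∀ᶠ x in residual (ι → c0C), ∀ J, ∀ l ∈ K J, ∀ m z,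
      MapClusterPt z Filter.atTop fun n => (T l ^ n) (coordPow m x) :=
    eventually_countable_forall.2 fun J => by
      obtain ⟨D₁, D₂, D₃, N, hJ⟩ := hφ (K J) (Set.subset_iUnion K J) (hK J)
      exact hJ.eventually_residual_forall_mapClusterPt hα0 hα1 fun l hl =>
        hT l (Set.mem_iUnion_of_mem J hl)
  have hne : ∀ᶠ x in residual (ι → c0C), x ≠ 0 :=
    residual_of_dense_open isOpen_compl_singleton (dense_compl_singleton 0)
  obtain ⟨x, hx, hx0⟩ := (dense_of_mem_residual (hcluster.and hne)).nonempty
  refine ⟨x, hx0, fun a ha ha0 l hl => ?_⟩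
  obtain ⟨J, hJ⟩ := Set.mem_iUnion.1 hl
  exact (hT l hl).dense_range_of_mem_adjoin (hx J l hJ) ha ha0

end Existence

section Weights

variable {d : ℕ} {w : ℝ → ℕ → ℝ}

lemma isSigmaCompact_setOf_forall_mem {ι X : Type*} [Finite ι] [TopologicalSpace X] {I : Set X}
    (hI : IsSigmaCompact I) : IsSigmaCompact {lam : ι → X | ∀ i, lam i ∈ I} := by
  have := isSigmaCompact_iff_sigmaCompactSpace.1 hI
  have hrange : {lam : ι → X | ∀ i, lam i ∈ I} = Set.range fun (g : ι → I) i => (g i : X) :=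
    Set.ext fun lam => ⟨fun h => ⟨fun i => ⟨lam i, h i⟩, rfl⟩, by rintro ⟨g, rfl⟩ i; exact (g i).2⟩
  rw [hrange]
  exact isSigmaCompact_range (by fun_prop)

lemma potentialBounds_sum_log {I₀ : Set ℝ} (hwpos : ∀ a ∈ I₀, ∀ n, 1 ≤ n → 0 < w a n)
    (hwcont : ∀ n, ContinuousOn (fun a => w a n) I₀) {α D₁ D₂ D₃ : ℝ} {N : ℕ} (hD₁ : 0 < D₁)
    (hD₂ : 0 < D₂) (hD₃ : 0 < D₃)
    (hlip : ∀ n, N ≤ n → ∀ a ∈ I₀, ∀ b ∈ I₀,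
      |(∑ k ∈ Finset.Icc 1 n, Real.log (w a k)) - ∑ k ∈ Finset.Icc 1 n, Real.log (w b k)| ≤
        D₁ * (n : ℝ) ^ α * |a - b|)
    (hgrowth : ∀ n, N ≤ n → ∀ a ∈ I₀,
      D₂ * Real.exp (D₃ * (n : ℝ) ^ α) ≤ ∏ k ∈ Finset.Icc 1 n, w a k)
    {K : Set (Fin d → ℝ)} (hK : IsCompact K) (hKI : ∀ lam ∈ K, ∀ i, lam i ∈ I₀) :
    PotentialBounds (fun lam i n => ∑ k ∈ Finset.Icc 1 n, Real.log (w (lam i) k)) α K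
      D₁ (Real.log D₂) D₃ N where
  isCompact := hK
  continuousOn i n := continuousOn_finsetSum _ fun k hk =>
    ((hwcont k).comp (continuous_apply i).continuousOn fun lam hlam => hKI lam hlam i).log
      fun lam hlam => (hwpos _ (hKI lam hlam i) k (Finset.mem_Icc.1 hk).1).ne'
  lipschitz_pos := hD₁
  lipschitz l hl ν hν i n hn := by
    refine (hlip n hn _ (hKI l hl i) _ (hKI ν hν i)).trans ?_
    rw [← Real.dist_eq]
    gcongr
    exact dist_le_pi_dist l ν i
  growth_pos := hD₃
  growth l hl i n hn := by
    have hpos : ∀ k ∈ Finset.Icc 1 n, w (l i) k ≠ 0 := fun k hk =>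
      (hwpos _ (hKI l hl i) k (Finset.mem_Icc.1 hk).1).ne'
    calc Real.log D₂ + D₃ * (n : ℝ) ^ α = Real.log (D₂ * Real.exp (D₃ * (n : ℝ) ^ α)) := by
          rw [Real.log_mul hD₂.ne' (Real.exp_ne_zero _), Real.log_exp]
      _ ≤ Real.log (∏ k ∈ Finset.Icc 1 n, w (l i) k) :=
          Real.log_le_log (by positivity) (hgrowth n hn _ (hKI l hl i))
      _ = ∑ k ∈ Finset.Icc 1 n, Real.log (w (l i) k) := Real.log_prod hpos

lemma commonHypercyclicAlgebraCWC0_of_adjoin {S : Set (Fin d → ℝ)}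
    {T : (Fin d → ℝ) → (Fin d → c0C) →L[ℂ] (Fin d → c0C)} {x : Fin d → c0C} (hx : x ≠ 0)
    (h : ∀ a ∈ NonUnitalAlgebra.adjoin ℂ {x}, a ≠ 0 → ∀ lam ∈ S,
      Dense (Set.range fun n : ℕ => ((T lam) ^ (n + 1)) a)) :
    CommonHypercyclicAlgebraCWC0 d S T :=
  ⟨NonUnitalAlgebra.adjoin ℂ {x}, zero_mem _, fun _ ha _ hb => add_mem ha hb,
    fun c _ ha => SMulMemClass.smul_mem c ha,
    fun a ha b hb => ⟨a * b, mul_mem ha hb, fun _ _ => rfl⟩,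
    ⟨x, NonUnitalAlgebra.self_mem_adjoin_singleton ℂ x, hx⟩, h⟩

end Weights

theorem stmt_1_general (d : ℕ) (hd : 1 ≤ d)
    (α : ℝ) (hα0 : 0 < α) (hα1 : α < 1 / (d : ℝ))
    (I : Set ℝ) (hIσ : IsSigmaCompact I)
    (w : ℝ → ℕ → ℝ)
    (hwpos : ∀ a ∈ I, ∀ n : ℕ, 1 ≤ n → 0 < w a n)
    (hwcont : ∀ n : ℕ, ContinuousOn (fun a => w a n) I)
    (hcrit : ∀ I₀ ⊆ I, IsCompact I₀ →
      ∃ D₁ > (0 : ℝ), ∃ D₂ > (0 : ℝ), ∃ D₃ > (0 : ℝ), ∃ N : ℕ, ∀ n : ℕ, N ≤ n →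
        (∀ a ∈ I₀, ∀ b ∈ I₀,
          |(∑ i ∈ Finset.Icc 1 n, Real.log (w a i)) -
              ∑ i ∈ Finset.Icc 1 n, Real.log (w b i)| ≤ D₁ * (n : ℝ) ^ α * |a - b|) ∧
        (∀ a ∈ I₀, D₂ * Real.exp (D₃ * (n : ℝ) ^ α) ≤ ∏ i ∈ Finset.Icc 1 n, w a i))
    (T : (Fin d → ℝ) → ((Fin d → c0C) →L[ℂ] (Fin d → c0C)))
    (hT : ∀ lam : Fin d → ℝ, (∀ i, lam i ∈ I) → IsProductShiftC0 d w (T lam) lam) :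
    CommonHypercyclicAlgebraCWC0 d {lam | ∀ i, lam i ∈ I} T := by
  have : Nonempty (Fin d) := Fin.pos_iff_nonempty.1 hd
  have hφ : ∀ K ⊆ {lam : Fin d → ℝ | ∀ i, lam i ∈ I}, IsCompact K → ∃ D₁ D₂ D₃ N,
      PotentialBounds (fun lam i n => ∑ k ∈ Finset.Icc 1 n, Real.log (w (lam i) k)) α K
        D₁ D₂ D₃ N := fun K hKI hK => by
    have hI₀ : ⋃ i, Function.eval i '' K ⊆ I :=
      Set.iUnion_subset fun i => Set.image_subset_iff.2 fun lam hlam => hKI hlam i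
    obtain ⟨D₁, hD₁, D₂, hD₂, D₃, hD₃, N, h⟩ := hcrit _ hI₀
      (isCompact_iUnion fun i => hK.image (continuous_apply i))
    exact ⟨D₁, Real.log D₂, D₃, N, potentialBounds_sum_log (fun a ha => hwpos a (hI₀ ha))
      (fun n => (hwcont n).mono hI₀) hD₁ hD₂ hD₃ (fun n hn => (h n hn).1) (fun n hn => (h n hn).2)
      hK fun lam hlam i => Set.mem_iUnion_of_mem i (Set.mem_image_of_mem _ hlam)⟩
  obtain ⟨x, hx0, hx⟩ := exists_ne_zero_forall_mem_adjoin_dense_range hα0 hα1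
    (isSigmaCompact_setOf_forall_mem hIσ) hφ fun lam hlam =>
      (hT lam hlam).isPotentialShift fun i => hwpos _ (hlam i)
  exact commonHypercyclicAlgebraCWC0_of_adjoin hx0 hx

/-- Corollary 1.1 of the paper (case `X = c₀(ℕ)`). -/
theorem stmt_1 (d : ℕ) (hd : 1 ≤ d)
    (α : ℝ) (hα0 : 0 < α) (hα1 : α < 1 / (d : ℝ))
    (I : Set ℝ) (hIpos : ∀ a ∈ I, 0 < a) (hIσ : IsSigmaCompact I)
    (w : ℝ → ℕ → ℝ)
    (hwpos : ∀ a ∈ I, ∀ n : ℕ, 1 ≤ n → 0 < w a n)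
    (hwbdd : ∀ a ∈ I, ∃ C : ℝ, ∀ n : ℕ, 1 ≤ n → w a n ≤ C)
    (hwcont : ∀ n : ℕ, ContinuousOn (fun a => w a n) I)
    (hcrit : ∀ I₀ ⊆ I, IsCompact I₀ →
      ∃ D₁ > (0 : ℝ), ∃ D₂ > (0 : ℝ), ∃ D₃ > (0 : ℝ), ∃ N : ℕ, ∀ n : ℕ, N ≤ n →
        (∀ a ∈ I₀, ∀ b ∈ I₀,
          |(∑ i ∈ Finset.Icc 1 n, Real.log (w a i)) -
              ∑ i ∈ Finset.Icc 1 n, Real.log (w b i)| ≤ D₁ * (n : ℝ) ^ α * |a - b|) ∧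
        (∀ a ∈ I₀, D₂ * Real.exp (D₃ * (n : ℝ) ^ α) ≤ ∏ i ∈ Finset.Icc 1 n, w a i))
    (T : (Fin d → ℝ) → ((Fin d → c0C) →L[ℂ] (Fin d → c0C)))
    (hT : ∀ lam : Fin d → ℝ, (∀ i, lam i ∈ I) → IsProductShiftC0 d w (T lam) lam) :
    CommonHypercyclicAlgebraCWC0 d {lam | ∀ i, lam i ∈ I} T :=
  stmt_1_general d hd α hα0 hα1 I hIσ w hwpos hwcont hcrit T hT
end
end
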